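/- arXiv:2506.07571 — 10 statements merged into one kernel-verified Lean document; each statement's English description precedes it below -/
import Mathlib

section
/- There exist three points o₁, o₂, o₃ ∈ ℝ² with the following property: for every nonempty set D ⊆ [0,1) × [0,1) with size(D) > 0 there exist an index k ∈ {1,2,3} and integers ℓ, i, j such that D ⊆ σ(o_k, ℓ, i, j) and 2^ℓ ≤ 6 · size(D). (That is, every object contained in the unit square is 6-aligned with one of three fixed hierarchical grids.) -/
/-- The cell `σ(o, ℓ, i, j)` of the hierarchical grid centered at `o`. -/
noncomputable def gridCell (o : ℝ × ℝ) (ℓ i j : ℤ) : Set (ℝ × ℝ) :=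
  Set.Ico (o.1 + (i : ℝ) * 2 ^ ℓ) (o.1 + ((i : ℝ) + 1) * 2 ^ ℓ) ×ˢ
    Set.Ico (o.2 + (j : ℝ) * 2 ^ ℓ) (o.2 + ((j : ℝ) + 1) * 2 ^ ℓ)

/-- The side length of the smallest enclosing axis-parallel square of `D`. -/
noncomputable def sqSize (D : Set (ℝ × ℝ)) : ℝ :=
  max (sSup (Prod.fst '' D) - sInf (Prod.fst '' D))
      (sSup (Prod.snd '' D) - sInf (Prod.snd '' D))

/-!
Center three grids at `(k / 3, k / 3)` for `k = 0, 1, 2` and let `s` be the size of `D`. If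
`s > 1 / 3`, the unit square itself is a good enough cell. Otherwise there is a level `ℓ ≤ 0` with
`3 * s ≤ 2 ^ ℓ ≤ 6 * s`. As `3` is coprime to the powers of two, lines of level `ℓ` in two different
grids are at distance at least `2 ^ ℓ / 3 ≥ s`, so each coordinate projection of `D` is cut by at
most one of the grids. Two projections cannot spoil three grids.
-/

section GridCuts

variable {K : Type*} [Field K] [LinearOrder K] [IsStrictOrderedRing K]

/-- The one-dimensional grid `x + ℤ L` cuts the interval `[a, b]`, that is, for `a ≤ b`, the
endpoints lie in different cells `[x + i L, x + (i + 1) L)`. Since cells are half-open, a grid point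
at `b` cuts the interval and one at `a` does not. -/
def GridCuts (x L a b : K) : Prop :=
  ∃ p : ℤ, x + p * L ∈ Set.Ioc a b

theorem exists_Icc_subset_Ico_of_not_gridCuts [Archimedean K] {x L a b : K} (hL : 0 < L)
    (h : ¬ GridCuts x L a b) :
    ∃ i : ℤ, Set.Icc a b ⊆ Set.Ico (x + i * L) (x + (i + 1) * L) := by
  obtain ⟨i, ⟨hia, hai⟩, -⟩ := existsUnique_zsmul_near_of_pos hL (a - x)
  simp only [zsmul_eq_mul, Int.cast_add, Int.cast_one] at hia hai
  have hbi : b < x + (i + 1) * L := by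
    by_contra! hib
    exact h ⟨i + 1, by push_cast; linarith, by push_cast; exact hib⟩
  exact ⟨i, Set.Icc_subset_Ico (by linarith) hbi⟩

theorem le_mul_abs_sub_of_not_modEq {N m : ℕ} (hN : 0 < N) (hNm : N.Coprime m) {k l : ℤ} {L : K}
    (hL : L * m = 1) (hkl : ¬ k ≡ l [ZMOD N]) (p q : ℤ) :
    L ≤ N * |((l : K) / N + q * L) - (k / N + p * L)| := by
  have hLpos : 0 < L := pos_of_mul_pos_left (hL ▸ one_pos) m.cast_nonneg
  -- The two grid points are `d * (L / N)` apart.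
  let d : ℤ := (l - k) * m + N * (q - p)
  have hd : d ≠ 0 := fun hzero => by
    have hdvd : (N : ℤ) ∣ (l - k) * m := ⟨-(q - p), by linear_combination hzero⟩
    exact hkl (Int.modEq_iff_dvd.2
      ((Nat.isCoprime_iff_coprime.2 hNm).dvd_of_dvd_mul_right hdvd))
  have hdist : L * d = N * (((l : K) / N + q * L) - (k / N + p * L)) := by
    have hN' : (N : K) ≠ 0 := by exact_mod_cast hN.ne'
    simp only [d]
    push_cast
    field_simp
    linear_combination ((l : K) - k) * hL
  calc L ≤ L * |(d : K)| :=
        le_mul_of_one_le_right hLpos.le (by exact_mod_cast Int.one_le_abs hd)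
    _ = |L * d| := by rw [abs_mul, abs_of_pos hLpos]
    _ = N * |((l : K) / N + q * L) - (k / N + p * L)| := by rw [hdist, abs_mul, Nat.abs_cast]

theorem GridCuts.modEq {N m : ℕ} (hN : 0 < N) (hNm : N.Coprime m) {k l : ℤ} {L a b : K}
    (hL : L * m = 1) (hab : N * (b - a) ≤ L) (hk : GridCuts ((k : K) / N) L a b)
    (hl : GridCuts ((l : K) / N) L a b) : k ≡ l [ZMOD N] := by
  obtain ⟨p, hap, hpb⟩ := hk
  obtain ⟨q, haq, hqb⟩ := hl
  by_contra hkl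
  have hlt : |((l : K) / N + q * L) - (k / N + p * L)| < b - a :=
    abs_sub_lt_iff.2 ⟨by linarith, by linarith⟩
  have hN' : (0 : K) < N := by exact_mod_cast hN
  exact absurd ((le_mul_abs_sub_of_not_modEq hN hNm hL hkl p q).trans_lt
    (mul_lt_mul_of_pos_left hlt hN')) hab.not_gt

theorem exists_forall_not_gridCuts {ι : Type*} [Fintype ι] {N m : ℕ} (hι : Fintype.card ι < N)
    (hNm : N.Coprime m) {L : K} (hL : L * m = 1) {a b : ι → K}
    (hab : ∀ t, N * (b t - a t) ≤ L) :
    ∃ k : Fin N, ∀ t, ¬ GridCuts ((k : K) / N) L (a t) (b t) := by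
  by_contra! h
  choose t ht using h
  obtain ⟨k, l, hkl, htkl⟩ := Fintype.exists_ne_map_eq_of_card_lt t (by simpa using hι)
  have hmod : (k : ℤ) ≡ (l : ℤ) [ZMOD N] :=
    GridCuts.modEq hι.pos hNm hL (hab (t k)) (by simpa using ht k)
      (by simpa [htkl] using ht l)
  exact hkl (Fin.ext ((Int.natCast_modEq_iff.1 hmod).eq_of_lt_of_lt k.isLt l.isLt))

end GridCuts

/-- `D` is `c`-aligned with the hierarchical grid centered at `o`: it lies in a cell at most `c`
times as wide as `D`. -/
def IsAligned (c : ℝ) (o : ℝ × ℝ) (D : Set (ℝ × ℝ)) : Prop :=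
  ∃ ℓ i j : ℤ, D ⊆ gridCell o ℓ i j ∧ (2 : ℝ) ^ ℓ ≤ c * sqSize D

theorem isAligned_zero_of_subset_unitSquare {c : ℝ} {D : Set (ℝ × ℝ)}
    (hD : D ⊆ Set.Ico (0 : ℝ) 1 ×ˢ Set.Ico (0 : ℝ) 1) (hc : 1 ≤ c * sqSize D) :
    IsAligned c 0 D :=
  ⟨0, 0, 0, by simpa [gridCell] using hD, by simpa using hc⟩

theorem exists_subset_gridCell_of_mul_sqSize_le {N n : ℕ} (hN : Odd N) (hN2 : 2 < N)
    {D : Set (ℝ × ℝ)} (hD : Bornology.IsBounded D) (hs : N * sqSize D ≤ 2 ^ (-n : ℤ)) :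
    ∃ k : Fin N, ∃ i j : ℤ, D ⊆ gridCell ((k : ℝ) / N, (k : ℝ) / N) (-n) i j := by
  have hcoprime : N.Coprime (2 ^ n) := (Nat.coprime_two_right.2 hN).pow_right n
  have hL : (2 : ℝ) ^ (-n : ℤ) * (2 ^ n : ℕ) = 1 := by
    simp [zpow_neg]
  have hfst : N * (sSup (Prod.fst '' D) - sInf (Prod.fst '' D)) ≤ (2 : ℝ) ^ (-n : ℤ) :=
    (mul_le_mul_of_nonneg_left (le_max_left _ _) N.cast_nonneg).trans hs
  have hsnd : N * (sSup (Prod.snd '' D) - sInf (Prod.snd '' D)) ≤ (2 : ℝ) ^ (-n : ℤ) :=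
    (mul_le_mul_of_nonneg_left (le_max_right _ _) N.cast_nonneg).trans hs
  obtain ⟨k, hk⟩ := exists_forall_not_gridCuts (ι := Fin 2) (by simpa using hN2) hcoprime hL
    (a := ![sInf (Prod.fst '' D), sInf (Prod.snd '' D)])
    (b := ![sSup (Prod.fst '' D), sSup (Prod.snd '' D)]) (Fin.forall_fin_two.2 ⟨hfst, hsnd⟩)
  have hpos : (0 : ℝ) < 2 ^ (-n : ℤ) := by positivity
  obtain ⟨i, hi⟩ := exists_Icc_subset_Ico_of_not_gridCuts hpos (hk 0)
  obtain ⟨j, hj⟩ := exists_Icc_subset_Ico_of_not_gridCuts hpos (hk 1)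
  exact ⟨k, i, j, Set.subset_fst_image_prod_snd_image.trans <|
    Set.prod_mono (hD.image_fst.subset_Icc_sInf_sSup.trans hi)
      (hD.image_snd.subset_Icc_sInf_sSup.trans hj)⟩

theorem exists_isAligned_of_mul_sqSize_le_one {N : ℕ} (hN : Odd N) (hN2 : 2 < N)
    {D : Set (ℝ × ℝ)} (hD : Bornology.IsBounded D) (hpos : 0 < sqSize D)
    (hs : N * sqSize D ≤ 1) :
    ∃ k : Fin N, IsAligned (2 * N) ((k : ℝ) / N, (k : ℝ) / N) D := by
  have hNs : 0 < N * sqSize D := mul_pos (by exact_mod_cast hN.pos) hpos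
  obtain ⟨n, hlt, hle⟩ := exists_nat_pow_near_of_lt_one hNs hs
    (by norm_num : (0 : ℝ) < 2⁻¹) (by norm_num)
  have hpow : (2 : ℝ) ^ (-n : ℤ) = 2⁻¹ ^ n := by simp
  obtain ⟨k, i, j, hcell⟩ := exists_subset_gridCell_of_mul_sqSize_le hN hN2 hD
    (hle.trans_eq hpow.symm)
  refine ⟨k, -n, i, j, hcell, ?_⟩
  rw [pow_succ] at hlt
  linarith

theorem stmt0 :
    ∃ o₁ o₂ o₃ : ℝ × ℝ,
      ∀ D : Set (ℝ × ℝ), D.Nonempty →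
        D ⊆ Set.Ico (0 : ℝ) 1 ×ˢ Set.Ico (0 : ℝ) 1 →
        0 < sqSize D →
        ∃ o ∈ ({o₁, o₂, o₃} : Set (ℝ × ℝ)), ∃ ℓ i j : ℤ,
          D ⊆ gridCell o ℓ i j ∧ (2 : ℝ) ^ ℓ ≤ 6 * sqSize D := by
  refine ⟨0, (1 / 3, 1 / 3), (2 / 3, 2 / 3), fun D _ hD hpos => ?_⟩
  rcases le_total (3 * sqSize D) 1 with hsmall | hlarge
  · have hbdd : Bornology.IsBounded D :=
      ((Metric.isBounded_Ico 0 1).prod (Metric.isBounded_Ico 0 1)).subset hD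
    obtain ⟨k, hk⟩ := exists_isAligned_of_mul_sqSize_le_one (N := 3) (by decide) (by norm_num)
      hbdd hpos (by exact_mod_cast hsmall)
    have hsix : (2 : ℝ) * (3 : ℕ) = 6 := by norm_num
    rw [hsix, Nat.cast_ofNat] at hk
    exact ⟨_, by fin_cases k <;> simp [Prod.ext_iff], hk⟩
  · exact ⟨0, by simp, isAligned_zero_of_subset_unitSquare hD (by linarith)⟩
end

section
/- Let c > 0, let o ∈ ℝ², and let D ⊆ ℝ² be a nonempty bounded set that is c-aligned with the hierarchical grid centered at o. If σ = σ(o,ℓ,i,j) is a cell of this hierarchical grid such that D ∩ σ ≠ ∅ and D is not contained in σ (so D meets the boundary of σ), then size(D) ≥ 2^ℓ / c. -/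
/-! The grid is laminar: `2 ^ ℓ` is an integer multiple of `2 ^ L` for `L ≤ ℓ`, so the sides of a
cell of level `ℓ` lie on grid lines of level `L`, and no cell of level `L` can straddle them. The
cell of level `L` witnessing that `D` is `c`-aligned contains `D`, so it meets the given cell of
level `ℓ` without being contained in it. Hence `ℓ < L`, and `2 ^ ℓ ≤ 2 ^ L ≤ c * sqSize D`. -/

theorem Ico_add_zsmul_subset_of_mem {G : Type*} [AddCommGroup G] [LinearOrder G]
    [IsOrderedAddMonoid G] {a u x : G} {k m n : ℤ}
    (hx : x ∈ Set.Ico (a + k • u) (a + (k + 1) • u))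
    (hx' : x ∈ Set.Ico (a + m • u) (a + n • u)) :
    Set.Ico (a + k • u) (a + (k + 1) • u) ⊆ Set.Ico (a + m • u) (a + n • u) := by
  have hu : 0 < u := by
    have := lt_of_add_lt_add_left (hx.1.trans_lt hx.2)
    rwa [add_one_zsmul, lt_add_iff_pos_right] at this
  have hmk : m < k + 1 :=
    (zsmul_lt_zsmul_iff_left hu).mp (lt_of_add_lt_add_left (hx'.1.trans_lt hx.2))
  have hkn : k < n :=
    (zsmul_lt_zsmul_iff_left hu).mp (lt_of_add_lt_add_left (hx.1.trans_lt hx'.2))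
  exact Set.Ico_subset_Ico
    (add_le_add_right (zsmul_le_zsmul_left hu.le (Int.lt_add_one_iff.mp hmk)) a)
    (add_le_add_right (zsmul_le_zsmul_left hu.le (Int.add_one_le_iff.mpr hkn)) a)

theorem exists_zpow_eq_intCast_mul_zpow {K : Type*} [DivisionRing K] {b : ℤ} (hb : (b : K) ≠ 0)
    {L ℓ : ℤ} (h : L ≤ ℓ) : ∃ N : ℤ, (b : K) ^ ℓ = N * (b : K) ^ L := by
  obtain ⟨n, rfl⟩ := Int.le.dest h
  refine ⟨b ^ n, ?_⟩
  rw [add_comm, zpow_add₀ hb, zpow_natCast, Int.cast_pow]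

/-- The dyadic interval of level `ℓ` and index `i` with origin `a`: the one-dimensional analogue of
`gridCell`, to which laminarity reduces coordinatewise. -/
def dyadicInterval {K : Type*} [DivisionRing K] [Preorder K] (a : K) (ℓ i : ℤ) : Set K :=
  Set.Ico (a + (i : K) * 2 ^ ℓ) (a + ((i : K) + 1) * 2 ^ ℓ)

theorem dyadicInterval_subset_of_le_of_mem {K : Type*} [Field K] [LinearOrder K]
    [IsStrictOrderedRing K] {a x : K} {L ℓ I i : ℤ} (h : L ≤ ℓ)
    (hx : x ∈ dyadicInterval a L I) (hx' : x ∈ dyadicInterval a ℓ i) :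
    dyadicInterval a L I ⊆ dyadicInterval a ℓ i := by
  obtain ⟨N, hN⟩ : ∃ N : ℤ, (2 : K) ^ ℓ = N * 2 ^ L := by
    simpa only [Int.cast_ofNat] using
      exists_zpow_eq_intCast_mul_zpow (K := K) (b := 2) (by norm_num) h
  have hfine : dyadicInterval a L I =
      Set.Ico (a + I • (2 : K) ^ L) (a + (I + 1) • (2 : K) ^ L) := by
    simp only [dyadicInterval, zsmul_eq_mul, Int.cast_add, Int.cast_one]
  have hcoarse : dyadicInterval a ℓ i =
      Set.Ico (a + (i * N) • (2 : K) ^ L) (a + ((i + 1) * N) • (2 : K) ^ L) := by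
    simp only [dyadicInterval, hN, zsmul_eq_mul, Int.cast_mul, Int.cast_add, Int.cast_one,
      mul_assoc]
  rw [hfine] at hx ⊢
  rw [hcoarse] at hx' ⊢
  exact Ico_add_zsmul_subset_of_mem hx hx'

theorem gridCell_eq_prod (o : ℝ × ℝ) (ℓ i j : ℤ) :
    gridCell o ℓ i j = dyadicInterval o.1 ℓ i ×ˢ dyadicInterval o.2 ℓ j :=
  rfl

theorem gridCell_subset_of_le_of_mem {o p : ℝ × ℝ} {L ℓ I J i j : ℤ} (h : L ≤ ℓ)
    (hp : p ∈ gridCell o L I J) (hp' : p ∈ gridCell o ℓ i j) :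
    gridCell o L I J ⊆ gridCell o ℓ i j := by
  rw [gridCell_eq_prod] at hp hp' ⊢
  exact Set.prod_mono (dyadicInterval_subset_of_le_of_mem h hp.1 hp'.1)
    (dyadicInterval_subset_of_le_of_mem h hp.2 hp'.2)

theorem level_lt_of_subset_gridCell_of_not_subset {o : ℝ × ℝ} {D : Set (ℝ × ℝ)} {L ℓ I J i j : ℤ}
    (hD : D ⊆ gridCell o L I J) (hmeet : (D ∩ gridCell o ℓ i j).Nonempty)
    (hnsub : ¬ D ⊆ gridCell o ℓ i j) : ℓ < L := by
  by_contra! hle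
  obtain ⟨p, hpD, hp⟩ := hmeet
  exact hnsub (hD.trans (gridCell_subset_of_le_of_mem hle (hD hpD) hp))

theorem stmt1 (c : ℝ) (hc : 0 < c) (o : ℝ × ℝ) (D : Set (ℝ × ℝ))
    (hne : D.Nonempty) (hbd : Bornology.IsBounded D)
    (halign : ∃ ℓ i j : ℤ, D ⊆ gridCell o ℓ i j ∧ (2 : ℝ) ^ ℓ ≤ c * sqSize D)
    (ℓ i j : ℤ) (hmeet : (D ∩ gridCell o ℓ i j).Nonempty)
    (hnsub : ¬ D ⊆ gridCell o ℓ i j) :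
    (2 : ℝ) ^ ℓ / c ≤ sqSize D := by
  obtain ⟨L, I, J, hD, hL⟩ := halign
  have hlt : ℓ < L := level_lt_of_subset_gridCell_of_not_subset hD hmeet hnsub
  rw [div_le_iff₀' hc]
  calc (2 : ℝ) ^ ℓ ≤ 2 ^ L := zpow_le_zpow_right₀ one_le_two hlt.le
    _ ≤ c * sqSize D := hL
end

section
/- There is an absolute constant c > 0 with the following property. For every finite family (D_i)_{i ∈ I} of closed disks in ℝ² with |I| = n ≥ 1, there exists a partition 𝒫 of the index set I such that: (a) each part P ∈ 𝒫 is stabbed, i.e. there is a point contained in every disk D_i with i ∈ P; and (b) for every point x ∈ ℝ², the number of parts P ∈ 𝒫 whose flower ⋃_{i∈P} D_i contains x is at most c · (log₂ n + 1). -/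
/-!
Work in a finite-dimensional normed space with coordinates in `ℝ ^ d`. Shift the dyadic grids of `ℝ`
by `0` and by `1 / 3` of the coarsest mesh: at every level, the points of the two grids are at
distance at least a third of the mesh of that level from each other, because `3` does not divide a
power of `2`. Hence every ball lies in a single cell, of side comparable to its radius, of one of
the `2 ^ d` dyadic grids obtained by choosing a shift in each coordinate. It suffices to treat each
of these `2 ^ d` classes of balls separately.

Within one class, fewer than `2 ^ (N + 1)` balls are handled by a centroid recursion on the tree of
cells. Let `C` be a deepest cell containing at least `2 ^ N` balls of its own level or deeper. The
balls meeting `C` whose level is at most that of `C` are at least comparable to `C` in size, so a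
bounded number of points stabs all of them. Each remaining ball lies either in one of the children
of `C` or outside of `C`, and each of these regions contains fewer than `2 ^ N` of them. Balls in
different regions are disjoint, so each halving of the family costs a constant in the ply.
-/

open Metric

open scoped Function

/-! ### Covers by stabbed flowers -/

section FlowerCover

variable {ι X : Type*} {D : ι → Set X}

/-- The flower of a set `Q` of indices: the union of the members of `D` indexed by `Q`. -/
def flower (D : ι → Set X) (Q : Set ι) : Set X := ⋃ i ∈ Q, D i

lemma mem_flower {Q : Set ι} {x : X} : x ∈ flower D Q ↔ ∃ i ∈ Q, x ∈ D i := by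
  simp only [flower, Set.mem_iUnion, exists_prop]

lemma flower_mono {Q R : Set ι} (h : Q ⊆ R) : flower D Q ⊆ flower D R :=
  Set.biUnion_subset_biUnion_left h

/-- The sets in `F` cover the index set `S`, are contained in it, and are stabbed: the members of
`D` indexed by a set of `F` have a common point. -/
def IsStabbedCover (D : ι → Set X) (S : Set ι) (F : Set (Set ι)) : Prop :=
  (∀ Q ∈ F, Q ⊆ S ∧ ∃ p, ∀ i ∈ Q, p ∈ D i) ∧ ∀ i ∈ S, ∃ Q ∈ F, i ∈ Q

lemma IsStabbedCover.iUnion {σ : Type*} {S : σ → Set ι} {F : σ → Set (Set ι)}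
    (h : ∀ s, IsStabbedCover D (S s) (F s)) : IsStabbedCover D (⋃ s, S s) (⋃ s, F s) := by
  refine ⟨fun Q hQ => ?_, fun i hi => ?_⟩
  · obtain ⟨s, hQs⟩ := Set.mem_iUnion.1 hQ
    obtain ⟨hQS, hp⟩ := (h s).1 Q hQs
    exact ⟨hQS.trans (Set.subset_iUnion S s), hp⟩
  · obtain ⟨s, his⟩ := Set.mem_iUnion.1 hi
    obtain ⟨Q, hQ, hiQ⟩ := (h s).2 i his
    exact ⟨Q, Set.mem_iUnion_of_mem s hQ, hiQ⟩

/-- The index set `S` has a stabbed cover whose flowers have ply at most `b`. Covers are easier to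
combine than partitions; `HasFlowerCover.exists_finpartition` turns the former into the latter. -/
def HasFlowerCover (D : ι → Set X) (S : Set ι) (b : ℕ∞) : Prop :=
  ∃ F, IsStabbedCover D S F ∧ ∀ x, {Q ∈ F | x ∈ flower D Q}.encard ≤ b

namespace HasFlowerCover

lemma mono {S : Set ι} {b c : ℕ∞} (h : HasFlowerCover D S b) (hbc : b ≤ c) :
    HasFlowerCover D S c := by
  obtain ⟨F, hF, hb⟩ := h
  exact ⟨F, hF, fun x => (hb x).trans hbc⟩

lemma of_stabbed {S : Set ι} {T : Set X} {b : ℕ∞} (hT : T.encard ≤ b)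
    (hST : ∀ i ∈ S, (D i ∩ T).Nonempty) : HasFlowerCover D S b := by
  refine ⟨(fun p => {i ∈ S | p ∈ D i}) '' T, ⟨?_, fun i hi => ?_⟩, fun x => ?_⟩
  · rintro _ ⟨p, -, rfl⟩
    exact ⟨Set.sep_subset _ _, p, fun i hi => hi.2⟩
  · obtain ⟨p, hpi, hpT⟩ := hST i hi
    exact ⟨_, Set.mem_image_of_mem _ hpT, hi, hpi⟩
  · exact (Set.encard_le_encard (Set.sep_subset _ _)).trans ((Set.encard_image_le _ _).trans hT)

lemma iUnion {σ : Type*} [Fintype σ] {S : σ → Set ι} {b : σ → ℕ∞}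
    (h : ∀ s, HasFlowerCover D (S s) (b s)) : HasFlowerCover D (⋃ s, S s) (∑ s, b s) := by
  choose F hF hb using h
  refine ⟨⋃ s, F s, .iUnion hF, fun x => ?_⟩
  calc {Q ∈ ⋃ s, F s | x ∈ flower D Q}.encard
      = (⋃ s, {Q ∈ F s | x ∈ flower D Q}).encard := by
        congr 1
        ext Q
        simp only [Set.mem_iUnion, Set.mem_ofPred_eq, exists_and_right]
    _ ≤ ∑ s, {Q ∈ F s | x ∈ flower D Q}.encard := Set.encard_iUnion_le_of_fintype _
    _ ≤ ∑ s, b s := Finset.sum_le_sum fun s _ => hb s x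

lemma union {S T : Set ι} {b c : ℕ∞} (hS : HasFlowerCover D S b) (hT : HasFlowerCover D T c) :
    HasFlowerCover D (S ∪ T) (b + c) := by
  rw [Set.union_eq_iUnion]
  exact (Fintype.sum_bool fun s => cond s b c) ▸ iUnion (Bool.forall_bool.2 ⟨hT, hS⟩)

lemma iUnion_of_disjoint {σ : Type*} {S : σ → Set ι} {b : ℕ∞}
    (hdisj : Pairwise (Disjoint on fun s => flower D (S s)))
    (h : ∀ s, HasFlowerCover D (S s) b) : HasFlowerCover D (⋃ s, S s) b := by
  choose F hF hb using h
  have flower_subset {s : σ} {Q : Set ι} (hQ : Q ∈ F s) : flower D Q ⊆ flower D (S s) :=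
    flower_mono ((hF s).1 Q hQ).1
  refine ⟨⋃ s, F s, .iUnion hF, fun x => ?_⟩
  by_cases hx : ∃ s, x ∈ flower D (S s)
  · obtain ⟨s, hxs⟩ := hx
    refine (Set.encard_le_encard ?_).trans (hb s x)
    rintro Q ⟨hQ, hxQ⟩
    obtain ⟨t, hQt⟩ := Set.mem_iUnion.1 hQ
    obtain rfl : t = s := hdisj.eq (Set.not_disjoint_iff.2 ⟨x, flower_subset hQt hxQ, hxs⟩)
    exact ⟨hQt, hxQ⟩
  · have hempty : {Q ∈ ⋃ s, F s | x ∈ flower D Q} = ∅ := by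
      refine Set.eq_empty_iff_forall_notMem.2 ?_
      rintro Q ⟨hQ, hxQ⟩
      obtain ⟨s, hQs⟩ := Set.mem_iUnion.1 hQ
      exact hx ⟨s, flower_subset hQs hxQ⟩
    rw [hempty, Set.encard_empty]
    exact zero_le

lemma union_of_disjoint {S T : Set ι} {b : ℕ∞} (hdisj : Disjoint (flower D S) (flower D T))
    (hS : HasFlowerCover D S b) (hT : HasFlowerCover D T b) : HasFlowerCover D (S ∪ T) b := by
  rw [Set.union_eq_iUnion]
  refine iUnion_of_disjoint ?_ (Bool.forall_bool.2 ⟨hT, hS⟩)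
  convert pairwise_disjoint_on_bool.2 hdisj using 3 with s
  cases s <;> rfl

/-- The partition consists of the fibres of a map sending each index to a member of the cover
containing it. -/
lemma exists_finpartition [Fintype ι] [DecidableEq ι] {b : ℕ∞}
    (h : HasFlowerCover D Set.univ b) :
    ∃ P : Finpartition (Finset.univ : Finset ι), (∀ Q ∈ P.parts, ∃ p, ∀ i ∈ Q, p ∈ D i) ∧
      ∀ x, {Q : Finset ι | Q ∈ P.parts ∧ ∃ i ∈ Q, x ∈ D i}.encard ≤ b := by
  classical
  obtain ⟨F, ⟨hF, hcov⟩, hb⟩ := h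
  choose q hqF hq using fun i => hcov i (Set.mem_univ i)
  have hparts : ∀ Q ∈ (Finpartition.ofSetoid (Setoid.ker q)).parts,
      ∃ C ∈ F, Q = Finset.univ.filter fun i => q i = C := by
    intro Q hQ
    obtain ⟨i, -, rfl⟩ := Finset.mem_image.1 hQ
    exact ⟨q i, hqF i, by simp [Setoid.ker_def, eq_comm]⟩
  refine ⟨Finpartition.ofSetoid (Setoid.ker q), fun Q hQ => ?_, fun x => ?_⟩
  · obtain ⟨C, hC, rfl⟩ := hparts Q hQ
    obtain ⟨p, hp⟩ := (hF C hC).2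
    refine ⟨p, fun i hi => hp i ?_⟩
    rw [← (Finset.mem_filter.1 hi).2]
    exact hq i
  · refine le_trans ?_ (hb x)
    refine (Set.encard_le_encard ?_).trans
      (Set.encard_image_le (fun C => Finset.univ.filter fun i => q i = C) _)
    rintro Q ⟨hQ, i, hiQ, hxi⟩
    obtain ⟨C, hC, rfl⟩ := hparts Q hQ
    have hi : i ∈ C := by
      rw [← (Finset.mem_filter.1 hiQ).2]
      exact hq i
    exact ⟨C, ⟨hC, mem_flower.2 ⟨i, hi, hxi⟩⟩, rfl⟩

end HasFlowerCover

end FlowerCover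

/-! ### The centroid recursion on a tree of cells -/

section CellTree

variable {ι X γ : Type*}

/-- A nested sequence of partitions of `X`, such as a quadtree: `cell k x` names the cell of level
`k` containing `x`. -/
structure CellTree (X γ : Type*) where
  cell : ℕ → X → γ
  cell_eq_of_succ {k : ℕ} {x y : X} : cell (k + 1) x = cell (k + 1) y → cell k x = cell k y

namespace CellTree

/-- The preimages under `f` of the cells of a tree. -/
def comap {Y : Type*} (𝒯 : CellTree Y γ) (f : X → Y) : CellTree X γ where
  cell k x := 𝒯.cell k (f x)
  cell_eq_of_succ := 𝒯.cell_eq_of_succ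

variable (𝒯 : CellTree X γ) {D : ι → Set X} {ℓ : ι → ℕ} {S : Set ι} {k : ℕ} {u : γ}

lemma cell_eq_of_le {l : ℕ} (hkl : k ≤ l) {x y : X} (h : 𝒯.cell l x = 𝒯.cell l y) :
    𝒯.cell k x = 𝒯.cell k y := by
  induction l, hkl using Nat.le_induction with
  | base => exact h
  | succ l _ ih => exact ih (𝒯.cell_eq_of_succ h)

/-- Each set `D i` with `i ∈ S` is nonempty and lies in a single cell of level `ℓ i`. -/
def Fits (D : ι → Set X) (ℓ : ι → ℕ) (S : Set ι) : Prop :=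
  ∀ i ∈ S, (D i).Nonempty ∧ ∀ x ∈ D i, ∀ y ∈ D i, 𝒯.cell (ℓ i) x = 𝒯.cell (ℓ i) y

/-- The indices in `S` of level at least `k` whose sets lie in the cell `u` of level `k`. -/
def inside (D : ι → Set X) (ℓ : ι → ℕ) (S : Set ι) (k : ℕ) (u : γ) : Set ι :=
  {i ∈ S | k ≤ ℓ i ∧ ∀ x ∈ D i, 𝒯.cell k x = u}

/-- The indices in `S` of level at most `k` whose sets meet the cell `u` of level `k`. -/
def crossing (D : ι → Set X) (ℓ : ι → ℕ) (S : Set ι) (k : ℕ) (u : γ) : Set ι :=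
  {i ∈ S | ℓ i ≤ k ∧ ∃ x ∈ D i, 𝒯.cell k x = u}

variable {𝒯}

lemma Fits.mono {S' : Set ι} (h : 𝒯.Fits D ℓ S) (hS' : S' ⊆ S) : 𝒯.Fits D ℓ S' :=
  fun i hi => h i (hS' hi)

lemma Fits.mem_inside (h : 𝒯.Fits D ℓ S) {i : ι} (hi : i ∈ S) (hk : k ≤ ℓ i) {x : X}
    (hx : x ∈ D i) : i ∈ 𝒯.inside D ℓ S k (𝒯.cell k x) :=
  ⟨hi, hk, fun y hy => 𝒯.cell_eq_of_le hk ((h i hi).2 y hy x hx)⟩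

lemma inside_subset : 𝒯.inside D ℓ S k u ⊆ S := Set.sep_subset _ _

lemma inside_mono {S' : Set ι} (hS' : S' ⊆ S) : 𝒯.inside D ℓ S' k u ⊆ 𝒯.inside D ℓ S k u :=
  fun _ hi => ⟨hS' hi.1, hi.2⟩

lemma crossing_mono {S' : Set ι} (hS' : S' ⊆ S) :
    𝒯.crossing D ℓ S' k u ⊆ 𝒯.crossing D ℓ S k u :=
  fun _ hi => ⟨hS' hi.1, hi.2⟩

lemma cell_eq_of_mem_flower_inside {x : X} (hx : x ∈ flower D (𝒯.inside D ℓ S k u)) :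
    𝒯.cell k x = u := by
  obtain ⟨i, hi, hxi⟩ := mem_flower.1 hx
  exact hi.2.2 x hxi

lemma pairwise_disjoint_flower_inside :
    Pairwise (Disjoint on fun u => flower D (𝒯.inside D ℓ S k u)) :=
  fun _ _ huv => Set.disjoint_left.2 fun _ hxu hxv =>
    huv ((cell_eq_of_mem_flower_inside hxu).symm.trans (cell_eq_of_mem_flower_inside hxv))

lemma Fits.iUnion_inside_zero (h : 𝒯.Fits D ℓ S) : ⋃ u, 𝒯.inside D ℓ S 0 u = S := by
  refine (Set.iUnion_subset fun u => inside_subset).antisymm fun i hi => ?_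
  obtain ⟨x, hx⟩ := (h i hi).1
  exact Set.mem_iUnion_of_mem _ (h.mem_inside hi (Nat.zero_le _) hx)

lemma Fits.inside_subset_crossing_union (h : 𝒯.Fits D ℓ S) :
    𝒯.inside D ℓ S k u ⊆
      𝒯.crossing D ℓ S k u ∪ ⋃ v, 𝒯.inside D ℓ (𝒯.inside D ℓ S k u) (k + 1) v := by
  rintro i ⟨hi, hk, hu⟩
  obtain ⟨x, hx⟩ := (h i hi).1
  rcases hk.eq_or_lt with hk' | hk'
  · exact Or.inl ⟨hi, hk'.ge, x, hx, hu x hx⟩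
  · exact Or.inr (Set.mem_iUnion_of_mem _
      ((h.mono inside_subset).mem_inside ⟨hi, hk, hu⟩ hk' hx))

lemma Fits.disjoint_flower_inside_diff (h : 𝒯.Fits D ℓ S) :
    Disjoint (flower D (𝒯.inside D ℓ S k u))
      (flower D (S \ (𝒯.inside D ℓ S k u ∪ 𝒯.crossing D ℓ S k u))) := by
  refine Set.disjoint_left.2 fun x hxu hx => ?_
  obtain ⟨i, ⟨hiS, hi⟩, hxi⟩ := mem_flower.1 hx
  have hcell : 𝒯.cell k x = u := cell_eq_of_mem_flower_inside hxu
  rcases le_total k (ℓ i) with hk | hk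
  · exact hi (Or.inl (hcell ▸ h.mem_inside hiS hk hxi))
  · exact hi (Or.inr ⟨hiS, hk, x, hxi, hcell⟩)

lemma Fits.hasFlowerCover_of_light_zero {b m : ℕ∞} (h : 𝒯.Fits D ℓ S)
    (hlight : ∀ u, (𝒯.inside D ℓ S 0 u).encard < m)
    (hlt : ∀ S' ⊆ S, S'.encard < m → HasFlowerCover D S' b) : HasFlowerCover D S b := by
  rw [← h.iUnion_inside_zero]
  exact .iUnion_of_disjoint pairwise_disjoint_flower_inside
    fun u => hlt _ inside_subset (hlight u)

lemma Fits.hasFlowerCover_of_centroid {K b m : ℕ∞} {T : Set X} (h : 𝒯.Fits D ℓ S)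
    (hT : T.encard ≤ K) (hstab : ∀ i ∈ 𝒯.crossing D ℓ S k u, (D i ∩ T).Nonempty)
    (hout : (S \ 𝒯.inside D ℓ S k u).encard < m)
    (hlight : ∀ v, (𝒯.inside D ℓ S (k + 1) v).encard < m)
    (hlt : ∀ S' ⊆ S, S'.encard < m → HasFlowerCover D S' b) : HasFlowerCover D S (K + b) := by
  set H := 𝒯.inside D ℓ S k u
  set A := 𝒯.crossing D ℓ S k u
  set I := ⋃ v, 𝒯.inside D ℓ H (k + 1) v
  have hHS : H ⊆ S := inside_subset
  have hIH : I ⊆ H := Set.iUnion_subset fun v => inside_subset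
  have hI : HasFlowerCover D I b := .iUnion_of_disjoint pairwise_disjoint_flower_inside
    fun v => hlt _ (inside_subset.trans hHS)
      ((Set.encard_le_encard (inside_mono hHS)).trans_lt (hlight v))
  have hO : HasFlowerCover D (S \ (H ∪ A)) b := hlt _ Set.sdiff_subset
    ((Set.encard_le_encard (Set.sdiff_subset_sdiff_right Set.subset_union_left)).trans_lt hout)
  have hdisj : Disjoint (flower D I) (flower D (S \ (H ∪ A))) :=
    h.disjoint_flower_inside_diff.mono_left (flower_mono hIH)
  have hS : S = A ∪ (I ∪ S \ (H ∪ A)) := by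
    refine Set.Subset.antisymm (fun i hi => ?_) ?_
    · by_cases hiA : i ∈ A
      · exact Or.inl hiA
      by_cases hiH : i ∈ H
      · exact (h.inside_subset_crossing_union hiH).imp_right Or.inl
      · exact Or.inr (Or.inr ⟨hi, not_or.2 ⟨hiH, hiA⟩⟩)
    · exact Set.union_subset (Set.sep_subset _ _)
        (Set.union_subset (hIH.trans hHS) Set.sdiff_subset)
  rw [hS]
  exact (HasFlowerCover.of_stabbed hT hstab).union (hI.union_of_disjoint hdisj hO)

lemma exists_light_level (hS : S.Finite) {m : ℕ∞} (hm : 0 < m) :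
    ∃ k, ∀ u, (𝒯.inside D ℓ S k u).encard < m := by
  obtain ⟨L, hL⟩ := (hS.image ℓ).bddAbove
  refine ⟨L + 1, fun u => ?_⟩
  have hempty : 𝒯.inside D ℓ S (L + 1) u = ∅ :=
    Set.eq_empty_iff_forall_notMem.2 fun i hi =>
      (hL (Set.mem_image_of_mem ℓ hi.1)).not_gt hi.2.1
  rwa [hempty, Set.encard_empty]

lemma Fits.hasFlowerCover {K : ℕ∞}
    (hstab : ∀ k u, ∃ T : Set X, T.encard ≤ K ∧
      ∀ i ∈ 𝒯.crossing D ℓ S k u, (D i ∩ T).Nonempty)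
    (h : 𝒯.Fits D ℓ S) {N : ℕ} (hN : S.encard < 2 ^ N) : HasFlowerCover D S (K * N) := by
  classical
  induction N generalizing S with
  | zero =>
    have hS : S = ∅ := by simpa using hN
    exact .of_stabbed (T := ∅) (by simp) (by simp [hS])
  | succ N ih =>
    have hlt : ∀ S' ⊆ S, S'.encard < 2 ^ N → HasFlowerCover D S' (K * N) := by
      intro S' hS' hN'
      refine ih (fun k u => ?_) (h.mono hS') hN'
      obtain ⟨T, hT, hTS⟩ := hstab k u
      exact ⟨T, hT, fun i hi => hTS i (crossing_mono hS' hi)⟩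
    have hlight : ∃ k, ∀ u, (𝒯.inside D ℓ S k u).encard < 2 ^ N :=
      exists_light_level (Set.encard_lt_top_iff.1 hN.lt_top) (by positivity)
    rw [Nat.cast_succ, mul_add_one, add_comm]
    have hfind := Nat.find_spec hlight
    rcases hk : Nat.find hlight with _ | k <;> rw [hk] at hfind
    · exact (h.hasFlowerCover_of_light_zero hfind hlt).mono le_add_self
    · have hheavy : ∃ u, 2 ^ N ≤ (𝒯.inside D ℓ S k u).encard := by
        simpa using Nat.find_min hlight (hk ▸ k.lt_succ_self)
      obtain ⟨u, hu⟩ := hheavy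
      obtain ⟨T, hT, hTS⟩ := hstab k u
      refine h.hasFlowerCover_of_centroid hT hTS ?_ hfind hlt
      by_contra! hout
      refine hN.not_ge ?_
      rw [pow_succ, mul_two, ← Set.encard_sdiff_add_encard_of_subset
        (inside_subset : 𝒯.inside D ℓ S k u ⊆ S)]
      exact add_le_add hout hu

end CellTree

end CellTree

/-! ### Shifted dyadic grids -/

lemma exists_int_abs_sub_le_of_floor_ne {x y : ℝ} (h : ⌊x⌋ ≠ ⌊y⌋) :
    ∃ m : ℤ, |m - y| ≤ |x - y| := by
  rcases lt_or_gt_of_ne h with h | h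
  · refine ⟨⌊y⌋, abs_le_abs_of_nonpos (sub_nonpos.2 (Int.floor_le y)) ?_⟩
    have := Int.floor_lt.1 h
    linarith
  · refine ⟨⌊x⌋, abs_le_abs_of_nonneg (sub_nonneg.2 (Int.floor_lt.1 h).le) ?_⟩
    have := Int.floor_le x
    linarith

lemma exists_shift_floor_eq {k : ℕ} {t δ : ℝ} (hδ : 2 ^ k * δ < 1 / 6) :
    ∃ e : Fin 2, ∀ s, |s - t| ≤ δ → ⌊2 ^ k * (s - (e : ℝ) / 3)⌋ = ⌊2 ^ k * (t - (e : ℝ) / 3)⌋ := by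
  by_contra! hcon
  have hnear : ∀ e : Fin 2, ∃ m : ℤ, |m - 2 ^ k * (t - (e : ℝ) / 3)| < 1 / 6 := by
    intro e
    obtain ⟨s, hs, hne⟩ := hcon e
    obtain ⟨m, hm⟩ := exists_int_abs_sub_le_of_floor_ne hne
    refine ⟨m, hm.trans_lt (lt_of_le_of_lt ?_ hδ)⟩
    rw [← mul_sub, sub_sub_sub_cancel_right, abs_mul, abs_of_pos (by positivity)]
    gcongr
  obtain ⟨m₀, h₀⟩ := hnear 0
  obtain ⟨m₁, h₁⟩ := hnear 1
  have hlt : |3 * (m₀ - m₁) - 2 ^ k| < 1 := by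
    rw [abs_lt] at h₀ h₁
    simp only [Fin.val_zero, Fin.val_one, Nat.cast_zero, Nat.cast_one, zero_div, sub_zero, mul_sub]
      at h₀ h₁
    have h : |((3 * (m₀ - m₁) - 2 ^ k : ℤ) : ℝ)| < 1 := by
      push_cast
      exact abs_lt.2 ⟨by linarith, by linarith⟩
    exact_mod_cast h
  have hdvd : (3 : ℤ) ∣ 2 ^ k := ⟨m₀ - m₁, (sub_eq_zero.1 (Int.abs_lt_one_iff.1 hlt)).symm⟩
  exact absurd (Int.prime_three.dvd_of_dvd_pow hdvd) (by norm_num)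

section Dyadic

variable {κ : Type*}

lemma floor_two_pow_mul (k : ℕ) (t : ℝ) : ⌊2 ^ k * t⌋ = ⌊2 ^ (k + 1) * t⌋ / 2 := by
  have h : (2 : ℝ) ^ k * t = 2 ^ (k + 1) * t / (2 : ℕ) := by
    push_cast
    ring
  rw [h, Int.floor_div_natCast, Nat.cast_ofNat]

/-- The dyadic grids of `κ → ℝ` with origin `s`. A cell of level `k` is a half-open cube of side
`2⁻ᵏ`, named by its corner in units of the side; there are no levels coarser than `k = 0`. -/
noncomputable def dyadicTree (s : κ → ℝ) : CellTree (κ → ℝ) (κ → ℤ) where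
  cell k t j := ⌊2 ^ k * (t j - s j)⌋
  cell_eq_of_succ {k x y} h := funext fun j => by
    rw [floor_two_pow_mul k, floor_two_pow_mul k, congrFun h j]

variable [Fintype κ]

lemma exists_shift_dyadicTree_cell_eq {k : ℕ} {δ : ℝ} (hδ : 2 ^ k * δ < 1 / 6) (x : κ → ℝ) :
    ∃ e : κ → Fin 2, ∀ y, dist y x ≤ δ →
      (dyadicTree fun j => (e j : ℝ) / 3).cell k y =
        (dyadicTree fun j => (e j : ℝ) / 3).cell k x := by
  choose e he using fun j => exists_shift_floor_eq (t := x j) hδ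
  exact ⟨e, fun y hy => funext fun j => he j _ ((dist_le_pi_dist y x j).trans hy)⟩

lemma exists_shift_cell_eq_on_closedBall {X : Type*} [PseudoMetricSpace X] {f : X → κ → ℝ} {M : ℝ}
    (hM : 0 < M) (hf : ∀ x y, M * dist (f x) (f y) ≤ dist x y) {k : ℕ} {a : X} {r : ℝ}
    (hr : 8 * (2 ^ k * r) ≤ M) :
    ∃ e : κ → Fin 2, ∀ x ∈ closedBall a r,
      ((dyadicTree fun j => (e j : ℝ) / 3).comap f).cell k x =
        ((dyadicTree fun j => (e j : ℝ) / 3).comap f).cell k a := by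
  have hδ : 2 ^ k * (r / M) < 1 / 6 := by
    rw [← mul_div_assoc, div_lt_iff₀ hM]
    linarith
  obtain ⟨e, he⟩ := exists_shift_dyadicTree_cell_eq hδ (f a)
  exact ⟨e, fun x hx => he _ ((le_div_iff₀' hM).2 ((hf x a).trans (mem_closedBall.1 hx)))⟩

lemma dist_le_of_dyadicTree_cell_eq {s x y : κ → ℝ} {k : ℕ}
    (h : (dyadicTree s).cell k x = (dyadicTree s).cell k y) : dist x y ≤ (2 ^ k)⁻¹ := by
  refine (dist_pi_le_iff (by positivity)).2 fun j => ?_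
  have := (Int.abs_sub_lt_one_of_floor_eq_floor (congrFun h j)).le
  rw [← mul_sub, sub_sub_sub_cancel_right, abs_mul, abs_of_pos (by positivity)] at this
  rwa [Real.dist_eq, ← one_div, le_div_iff₀' (by positivity)]

end Dyadic

lemma exists_dyadic_levels {ι : Type*} {r : ι → ℝ} (hr : ∀ i, 0 < r i)
    (hbdd : BddAbove (Set.range r)) :
    ∃ (M : ℝ) (ℓ : ι → ℕ), 0 < M ∧ ∀ i, 8 * (2 ^ ℓ i * r i) ≤ M ∧ M ≤ 16 * (2 ^ ℓ i * r i) := by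
  obtain ⟨B, hB⟩ := hbdd
  have hlev : ∀ i, ∃ l : ℕ, 2 ^ l ≤ max B 1 / r i ∧ max B 1 / r i < 2 ^ (l + 1) := fun i =>
    exists_nat_pow_near ((one_le_div (hr i)).2 (le_max_of_le_left (hB (Set.mem_range_self i))))
      one_lt_two
  choose ℓ hlow hupp using hlev
  refine ⟨8 * max B 1, ℓ, by positivity, fun i => ⟨?_, ?_⟩⟩
  · have := (le_div_iff₀ (hr i)).1 (hlow i)
    linarith
  · have := (div_lt_iff₀ (hr i)).1 (hupp i)
    rw [pow_succ] at this
    linarith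

/-! ### Balls in a finite-dimensional normed space -/

section NormedSpace

variable (E : Type*) [NormedAddCommGroup E] [NormedSpace ℝ E] [FiniteDimensional ℝ E]

lemma exists_stabbing_encard_le (C : ℝ) :
    ∃ K : ℕ, ∀ (s : Set E) (ρ : ℝ), 0 < ρ → (∀ x ∈ s, ∀ y ∈ s, dist x y ≤ C * ρ) →
      ∃ T : Set E, T.encard ≤ K ∧ ∀ a r, ρ ≤ r → (closedBall a r ∩ s).Nonempty →
        (closedBall a r ∩ T).Nonempty := by
  have := FiniteDimensional.proper_real E
  obtain ⟨T₀, -, hfin, hT₀⟩ := (isCompact_closedBall (0 : E) (C + 1)).finite_cover_balls one_pos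
  refine ⟨T₀.ncard, fun s ρ hρ hs => ?_⟩
  rcases s.eq_empty_or_nonempty with rfl | ⟨y₀, hy₀⟩
  · exact ⟨∅, by simp, fun a r _ h => by simp at h⟩
  refine ⟨(fun c => y₀ + ρ • c) '' T₀, ?_, ?_⟩
  · rw [hfin.cast_ncard_eq]
    exact Set.encard_image_le _ _
  · rintro a r hr ⟨y, hya, hys⟩
    -- The ball of radius `ρ` around `z` is contained in `closedBall a r` and still meets `s`.
    obtain ⟨z, hyz, hza⟩ : ∃ z, dist y z ≤ ρ ∧ dist z a ≤ r - ρ :=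
      exists_dist_le_le hρ.le (sub_nonneg.2 hr) (by simpa using hya)
    have hz : ρ⁻¹ • (z - y₀) ∈ closedBall 0 (C + 1) := by
      rw [mem_closedBall_zero_iff, norm_smul, norm_inv, Real.norm_of_nonneg hρ.le,
        inv_mul_le_iff₀ hρ, ← dist_eq_norm]
      linarith [dist_triangle_left z y₀ y, hs y hys y₀ hy₀]
    obtain ⟨c, hc, hzc⟩ := Set.mem_iUnion₂.1 (hT₀ hz)
    refine ⟨y₀ + ρ • c, ?_, Set.mem_image_of_mem _ hc⟩
    have hdist : dist (y₀ + ρ • c) z ≤ ρ := by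
      have hrw : z = y₀ + ρ • ρ⁻¹ • (z - y₀) := by
        rw [smul_inv_smul₀ hρ.ne', add_sub_cancel]
      rw [hrw, dist_add_left, dist_smul₀, Real.norm_of_nonneg hρ.le, dist_comm]
      exact mul_le_of_le_one_right hρ.le (mem_ball.1 hzc).le
    exact mem_closedBall.2 (by linarith [dist_triangle (y₀ + ρ • c) z a])

open scoped NNReal in
lemma exists_scaled_coordinates :
    ∃ (d : ℕ) (C : ℝ≥0), ∀ M : ℝ, 0 < M → ∃ f : E → Fin d → ℝ, ∀ x y,
      M * dist (f x) (f y) ≤ dist x y ∧ dist x y ≤ C * (M * dist (f x) (f y)) := by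
  let L := (Module.finBasis ℝ E).equivFunL
  obtain ⟨c, hc, hL⟩ : ∃ c : ℝ≥0, 0 < c ∧ LipschitzWith c L :=
    ⟨_, add_pos_of_nonneg_of_pos zero_le one_pos, L.lipschitz.weaken le_self_add⟩
  obtain ⟨C, hC⟩ : ∃ C, AntilipschitzWith C L := ⟨_, L.antilipschitz⟩
  refine ⟨_, C * c, fun M hM => ⟨fun x => (M * c)⁻¹ • L x, fun x y => ?_⟩⟩
  have hdist : M * dist ((M * c : ℝ)⁻¹ • L x) ((M * c : ℝ)⁻¹ • L y) = dist (L x) (L y) / c := by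
    rw [dist_smul₀, Real.norm_of_nonneg (by positivity)]
    field_simp
  rw [hdist]
  constructor
  · exact (div_le_iff₀' (by positivity)).2 (hL.dist_le_mul x y)
  · calc dist x y ≤ C * dist (L x) (L y) := hC.le_mul_dist x y
      _ = (C * c : ℝ≥0) * (dist (L x) (L y) / c) := by
        push_cast
        field_simp

lemma exists_forall_hasFlowerCover_closedBall :
    ∃ K : ℕ, ∀ {ι : Type*} [Fintype ι] (a : ι → E) (r : ι → ℝ), (∀ i, 0 < r i) → ∀ N : ℕ,
      Fintype.card ι < 2 ^ N →
      HasFlowerCover (fun i => closedBall (a i) (r i)) Set.univ (K * N : ℕ) := by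
  obtain ⟨d, C, hcoord⟩ := exists_scaled_coordinates E
  obtain ⟨K, hK⟩ := exists_stabbing_encard_le E (C * 16)
  refine ⟨Fintype.card (Fin d → Fin 2) * K, fun {ι} _ a r hr N hN => ?_⟩
  obtain ⟨M, ℓ, hM, hℓ⟩ := exists_dyadic_levels hr (Set.finite_range r).bddAbove
  obtain ⟨f, hf⟩ := hcoord M hM
  let D i := closedBall (a i) (r i)
  let 𝒯 (e : Fin d → Fin 2) := (dyadicTree fun j => (e j : ℝ) / 3).comap f
  let S e : Set ι := {i | ∀ x ∈ D i, (𝒯 e).cell (ℓ i) x = (𝒯 e).cell (ℓ i) (a i)}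
  have hfits e : (𝒯 e).Fits D ℓ (S e) := fun i hi =>
    ⟨⟨a i, mem_closedBall_self (hr i).le⟩, fun x hx y hy => (hi x hx).trans (hi y hy).symm⟩
  have hstab e k u : ∃ T : Set E, T.encard ≤ K ∧
      ∀ i ∈ (𝒯 e).crossing D ℓ (S e) k u, (D i ∩ T).Nonempty := by
    have hdiam : ∀ x ∈ (𝒯 e).cell k ⁻¹' {u}, ∀ y ∈ (𝒯 e).cell k ⁻¹' {u},
        dist x y ≤ C * 16 * (M / (16 * 2 ^ k)) := fun x hx y hy =>
      calc dist x y ≤ C * (M * dist (f x) (f y)) := (hf x y).2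
        _ ≤ C * (M * (2 ^ k)⁻¹) := by
          gcongr
          exact dist_le_of_dyadicTree_cell_eq (hx.trans hy.symm)
        _ = C * 16 * (M / (16 * 2 ^ k)) := by field_simp
    obtain ⟨T, hT, hTs⟩ := hK _ (M / (16 * 2 ^ k)) (by positivity) hdiam
    refine ⟨T, hT, fun i ⟨_, hik, x, hxi, hxu⟩ => hTs _ _ ?_ ⟨x, hxi, hxu⟩⟩
    rw [div_le_iff₀' (by positivity), mul_assoc]
    refine (hℓ i).2.trans ?_
    have := (hr i).le
    gcongr
    exact one_le_two
  have hcover e : HasFlowerCover D (S e) (K * N) := (hfits e).hasFlowerCover (hstab e) <| by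
    refine (Set.encard_le_encard (Set.subset_univ _)).trans_lt ?_
    rw [Set.encard_univ, ENat.card_eq_coe_fintype_card]
    exact_mod_cast hN
  have hS : ⋃ e, S e = Set.univ := Set.eq_univ_of_forall fun i =>
    Set.mem_iUnion.2 (exists_shift_cell_eq_on_closedBall hM (fun x y => (hf x y).1) (hℓ i).1)
  rw [← hS]
  simpa [mul_assoc] using HasFlowerCover.iUnion hcover

end NormedSpace

theorem stmt5_general (E : Type*) [NormedAddCommGroup E] [NormedSpace ℝ E]
    [FiniteDimensional ℝ E] :
    ∃ c : ℝ, 0 < c ∧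
      ∀ (ι : Type*) [Fintype ι] [DecidableEq ι] [Nonempty ι] (a : ι → E) (r : ι → ℝ),
        (∀ i, 0 < r i) →
        ∃ Part : Finpartition (Finset.univ : Finset ι),
          (∀ P ∈ Part.parts, ∃ x, ∀ i ∈ P, x ∈ closedBall (a i) (r i)) ∧
          ∀ x, ({P | P ∈ Part.parts ∧ ∃ i ∈ P, x ∈ closedBall (a i) (r i)}.ncard : ℝ) ≤
            c * (Real.logb 2 (Fintype.card ι) + 1) := by
  obtain ⟨K, hK⟩ := exists_forall_hasFlowerCover_closedBall E
  refine ⟨K + 1, by positivity, fun ι _ _ _ a r hr => ?_⟩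
  set n := Fintype.card ι
  obtain ⟨Part, hstab, hply⟩ :=
    (hK a r hr _ (Nat.lt_pow_succ_log_self one_lt_two n)).exists_finpartition
  refine ⟨Part, hstab, fun x => ?_⟩
  calc _ ≤ ((K * (Nat.log 2 n + 1) : ℕ) : ℝ) := by
        exact_mod_cast ENat.toNat_le_of_le_natCast (hply x)
    _ = K * (Nat.log 2 n + 1) := by push_cast; rfl
    _ ≤ (K + 1) * (Real.logb 2 n + 1) := by
        have := Real.natLog_le_logb n 2
        gcongr
        · simp
        · exact_mod_cast this

theorem stmt5 :
    ∃ c : ℝ, 0 < c ∧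
      ∀ (n : ℕ), 1 ≤ n →
        ∀ (a : Fin n → EuclideanSpace ℝ (Fin 2)) (r : Fin n → ℝ),
          (∀ i, 0 < r i) →
          ∃ Part : Finpartition (Finset.univ : Finset (Fin n)),
            (∀ P ∈ Part.parts, ∃ x : EuclideanSpace ℝ (Fin 2),
                ∀ i ∈ P, x ∈ closedBall (a i) (r i)) ∧
            (∀ x : EuclideanSpace ℝ (Fin 2),
              (({P : Finset (Fin n) | P ∈ Part.parts ∧ ∃ i ∈ P,
                  x ∈ closedBall (a i) (r i)}).ncard : ℝ)
                ≤ c * (Real.logb 2 n + 1)) := by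
  obtain ⟨c, hc, h⟩ := stmt5_general (EuclideanSpace ℝ (Fin 2))
  refine ⟨c, hc, fun n hn a r hr => ?_⟩
  have : Nonempty (Fin n) := ⟨⟨0, hn⟩⟩
  simpa only [Fintype.card_fin] using h (Fin n) a r hr
end

section
/- For every α with 0 < α ≤ π/3 there is a constant c = c(α) > 0 with the following property. Let (Δ_i)_{i ∈ I} be a finite family of α-fat triangles in ℝ² with |I| = n ≥ 1, let 𝒫 be a partition of I such that each part P ∈ 𝒫 is stabbed (there is a point contained in every triangle Δ_i with i ∈ P), and for P ∈ 𝒫 let F_P = ⋃_{i∈P} Δ_i be its spiky flower. If every point x ∈ ℝ² is contained in at most k of the spiky flowers, then the number of unordered pairs {P, P'} of distinct parts with F_P ∩ F_{P'} ≠ ∅ is at most c · n · k. -/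
/-!
Whenever the flowers of two parts meet, some body `K i` of one meets some body `K j` of the other,
where after exchanging the two `diam (K i) ≤ diam (K j)`; the pair is charged to `i`. Shrinking
`K j` towards a common point until it has the size `s` of `K i` exhibits in `K j` a ball of radius
`ρ * s` whose centre lies within `2 * s` of a fixed point of `K i`. So `K j` contains one of the
points of a fixed finite `ρ`-net of the ball of radius `2`, scaled by `s` and translated to `K i`.
Each of these points lies in at most `k` of the flowers, so every `i` is charged at most `|N| * k`
times, `N` being the net. An `α`-fat triangle enters only through its inscribed disc, whose radius
is at least `sin α / 6` times the diameter because every height is at least `sin α / 2` times the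
diameter.
-/

/-- An `α`-fat triangle in the Euclidean plane: the convex hull of three affinely
independent points, each of whose interior angles is at least `α`. -/
def IsFatTriangle (α : ℝ) (Δ : Set (EuclideanSpace ℝ (Fin 2))) : Prop :=
  ∃ u v w : EuclideanSpace ℝ (Fin 2),
    AffineIndependent ℝ ![u, v, w] ∧
    Δ = convexHull ℝ {u, v, w} ∧
    α ≤ EuclideanGeometry.angle w u v ∧
    α ≤ EuclideanGeometry.angle u v w ∧
    α ≤ EuclideanGeometry.angle v w u

open Metric Module Set
open scoped EuclideanGeometry Real

section FatBody

variable {E : Type*} [NormedAddCommGroup E] [NormedSpace ℝ E] {ρ s : ℝ} {K : Set E} {p z : E}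

/-- A `ρ`-fat body: a bounded convex set with more than one point that contains a ball of radius
`ρ` times its diameter. The trivial sets are excluded so that the diameter is positive. -/
structure IsFatBody (ρ : ℝ) (K : Set E) : Prop where
  convex : Convex ℝ K
  isBounded : Bornology.IsBounded K
  nontrivial : K.Nontrivial
  exists_closedBall_subset : ∃ g, closedBall g (ρ * diam K) ⊆ K

lemma IsFatBody.diam_pos (hK : IsFatBody ρ K) : 0 < diam K :=
  Metric.diam_pos hK.nontrivial hK.isBounded

lemma IsFatBody.exists_dist_le_closedBall_subset (hK : IsFatBody ρ K) (hρ : 0 ≤ ρ) (hz : z ∈ K)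
    (hs : 0 < s) (hsK : s ≤ diam K) : ∃ g, dist g z ≤ s ∧ closedBall g (ρ * s) ⊆ K := by
  obtain ⟨g, hg⟩ := hK.exists_closedBall_subset
  have hd := hK.diam_pos
  have hgK : g ∈ K := hg (mem_closedBall_self (by positivity))
  set c := s / diam K
  have hc0 : 0 < c := div_pos hs hd
  have hcd : c * diam K = s := div_mul_cancel₀ s hd.ne'
  refine ⟨AffineMap.lineMap z g c, ?_, fun x hx ↦ ?_⟩
  · calc dist (AffineMap.lineMap z g c) z = c * dist z g := by
          rw [dist_lineMap_left, Real.norm_of_nonneg hc0.le]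
      _ ≤ c * diam K := by gcongr; exact dist_le_diam_of_mem hK.isBounded hz hgK
      _ = s := hcd
  -- `x` is the image of `y` under the homothety of ratio `c` centred at `z`.
  · set y := g + c⁻¹ • (x - AffineMap.lineMap z g c) with hy
    have hyK : y ∈ K := by
      apply hg
      rw [mem_closedBall, dist_eq_norm, hy, add_sub_cancel_left, norm_smul, ← dist_eq_norm,
        Real.norm_of_nonneg (inv_nonneg.2 hc0.le), inv_mul_le_iff₀ hc0]
      calc dist x (AffineMap.lineMap z g c) ≤ ρ * s := hx
        _ = c * (ρ * diam K) := by rw [← hcd]; ring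
    have hxy : x = AffineMap.lineMap z y c := by
      rw [hy, AffineMap.lineMap_apply_module', AffineMap.lineMap_apply_module', add_sub_right_comm,
        smul_add, smul_inv_smul₀ hc0.ne']
      abel
    rw [hxy]
    exact hK.convex.lineMap_mem hz hyK ⟨hc0.le, (div_le_one hd).2 hsK⟩

lemma exists_add_smul_mem_ball {N : Set E} {r : ℝ} (hN : closedBall 0 r ⊆ ⋃ y ∈ N, ball y ρ)
    (hs : 0 < s) {x : E} (hx : dist x p ≤ r * s) : ∃ y ∈ N, p + s • y ∈ ball x (ρ * s) := by
  have hx' : s⁻¹ • (x - p) ∈ closedBall (0 : E) r := by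
    rwa [mem_closedBall_zero_iff, norm_smul, Real.norm_of_nonneg (inv_nonneg.2 hs.le),
      inv_mul_le_iff₀ hs, ← dist_eq_norm, mul_comm]
  obtain ⟨y, hyN, hy⟩ := mem_iUnion₂.1 (hN hx')
  refine ⟨y, hyN, ?_⟩
  have hscale : p + s • y - x = s • (y - s⁻¹ • (x - p)) := by
    rw [smul_sub, smul_inv_smul₀ hs.ne']
    abel
  rw [mem_ball, dist_eq_norm, hscale, norm_smul, Real.norm_of_nonneg hs.le, ← dist_eq_norm,
    mul_comm]
  exact mul_lt_mul_of_pos_right (mem_ball'.1 hy) hs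

lemma IsFatBody.exists_add_smul_mem (hK : IsFatBody ρ K) (hρ : 0 ≤ ρ) {N : Set E}
    (hN : closedBall 0 2 ⊆ ⋃ y ∈ N, ball y ρ) (hs : 0 < s) (hsK : s ≤ diam K) (hz : z ∈ K)
    (hzp : dist z p ≤ s) : ∃ y ∈ N, p + s • y ∈ K := by
  obtain ⟨g, hgz, hg⟩ := hK.exists_dist_le_closedBall_subset hρ hz hs hsK
  have hgp : dist g p ≤ 2 * s := by linarith [dist_triangle g z p]
  obtain ⟨y, hyN, hy⟩ := exists_add_smul_mem_ball hN hs hgp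
  exact ⟨y, hyN, hg (ball_subset_closedBall hy)⟩

end FatBody

section Charging

variable {ι X : Type*}

/-- The parts `P` of `parts` whose flower `⋃ i ∈ P, K i` contains the point `x`. -/
def partsThrough (K : ι → Set X) (parts : Finset (Finset ι)) (x : X) : Set (Finset ι) :=
  {P | P ∈ parts ∧ ∃ i ∈ P, x ∈ K i}

/-- The unordered pairs of distinct parts of `parts` whose flowers `⋃ i ∈ P, K i` intersect. -/
def meetingPairs (K : ι → Set X) (parts : Finset (Finset ι)) : Set (Sym2 (Finset ι)) :=
  {q | ∃ P ∈ parts, ∃ P' ∈ parts, q = s(P, P') ∧ P ≠ P' ∧ ((⋃ i ∈ P, K i) ∩ ⋃ i ∈ P', K i).Nonempty}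

variable [Fintype ι] [DecidableEq ι] {K : ι → Set X} {size : ι → ℝ} {M : ι → Finset X}
  (Part : Finpartition (Finset.univ : Finset ι))

lemma meetingPairs_subset_iUnion_partsThrough
    (hM : ∀ i j, size i ≤ size j → (K i ∩ K j).Nonempty → ∃ x ∈ M i, x ∈ K j) :
    meetingPairs K Part.parts ⊆
      ⋃ i, ⋃ x ∈ M i, (fun Q ↦ s(Part.part i, Q)) '' partsThrough K Part.parts x := by
  have charge {i j : ι} {P Q : Finset ι} (hP : P ∈ Part.parts) (hi : i ∈ P) (hQ : Q ∈ Part.parts)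
      (hj : j ∈ Q) (hij : size i ≤ size j) (hK : (K i ∩ K j).Nonempty) :
      s(P, Q) ∈ ⋃ i, ⋃ x ∈ M i, (fun Q ↦ s(Part.part i, Q)) '' partsThrough K Part.parts x := by
    obtain ⟨x, hx, hxj⟩ := hM i j hij hK
    refine mem_iUnion.2 ⟨i, mem_iUnion₂.2 ⟨x, hx, Q, ⟨hQ, j, hj, hxj⟩, ?_⟩⟩
    simp only [Part.part_eq_of_mem hP hi]
  rintro _ ⟨P, hP, Q, hQ, rfl, -, z, hzP, hzQ⟩
  obtain ⟨i, hi, hzi⟩ := mem_iUnion₂.1 hzP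
  obtain ⟨j, hj, hzj⟩ := mem_iUnion₂.1 hzQ
  rcases le_total (size i) (size j) with hij | hji
  · exact charge hP hi hQ hj hij ⟨z, hzi, hzj⟩
  · rw [Sym2.eq_swap]
    exact charge hQ hj hP hi hji ⟨z, hzj, hzi⟩

lemma ncard_meetingPairs_le {m k : ℕ}
    (hM : ∀ i j, size i ≤ size j → (K i ∩ K j).Nonempty → ∃ x ∈ M i, x ∈ K j)
    (hm : ∀ i, (M i).card ≤ m) (hk : ∀ x, (partsThrough K Part.parts x).ncard ≤ k) :
    (meetingPairs K Part.parts).ncard ≤ Fintype.card ι * (m * k) := by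
  calc (meetingPairs K Part.parts).ncard
      ≤ (⋃ i, ⋃ x ∈ M i, (fun Q ↦ s(Part.part i, Q)) '' partsThrough K Part.parts x).ncard :=
        ncard_le_ncard (meetingPairs_subset_iUnion_partsThrough Part hM) (toFinite _)
    _ ≤ ∑ i, ∑ x ∈ M i, ((fun Q ↦ s(Part.part i, Q)) '' partsThrough K Part.parts x).ncard :=
        (ncard_iUnion_le_of_fintype _).trans
          (Finset.sum_le_sum fun i _ ↦ (M i).set_ncard_biUnion_le _)
    _ ≤ ∑ i, ∑ _x ∈ M i, k := by
        gcongr with i _ x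
        exact (ncard_image_le (toFinite _)).trans (hk x)
    _ = ∑ i, (M i).card * k := by simp only [Finset.sum_const, smul_eq_mul]
    _ ≤ ∑ _i : ι, m * k := by gcongr with i; exact hm i
    _ = Fintype.card ι * (m * k) := by simp only [Finset.sum_const, Finset.card_univ, smul_eq_mul]

end Charging

section Simplex

variable {V P : Type*} [NormedAddCommGroup V] [InnerProductSpace ℝ V] [MetricSpace P]
  [NormedAddTorsor V P] {n : ℕ} [NeZero n]

lemma abs_signedInfDist_sub_signedInfDist_le_dist (s : Affine.Simplex ℝ P n) (i : Fin (n + 1))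
    (x y : P) : |s.signedInfDist i x - s.signedInfDist i y| ≤ dist x y := by
  rw [Affine.Simplex.signedInfDist, AffineSubspace.signedInfDist_def, signedDist_triangle_left,
    dist_comm]
  exact abs_signedDist_le_dist _ _ _

lemma mem_closedInterior_of_signedInfDist_nonneg (s : Affine.Simplex ℝ P n) {x : P}
    (hx : x ∈ affineSpan ℝ (range s.points)) (hpos : ∀ i, 0 ≤ s.signedInfDist i x) :
    x ∈ s.closedInterior := by
  obtain ⟨w, hw, rfl⟩ := eq_affineCombination_of_mem_affineSpan_of_fintype hx
  have hw0 (i) : 0 ≤ w i := by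
    have h := hpos i
    rw [s.signedInfDist_affineCombination i hw, ← dist_eq_norm_vsub] at h
    exact nonneg_of_mul_nonneg_left h (s.height_pos i)
  rw [Affine.Simplex.affineCombination_mem_closedInterior_iff hw]
  exact fun i ↦ ⟨hw0 i, hw ▸ Finset.single_le_sum (fun j _ ↦ hw0 j) (Finset.mem_univ i)⟩

lemma closedBall_incenter_inter_affineSpan_subset_closedInterior (s : Affine.Simplex ℝ P n) :
    closedBall s.incenter s.inradius ∩ affineSpan ℝ (range s.points) ⊆ s.closedInterior := by
  rintro x ⟨hx, hxs⟩
  refine mem_closedInterior_of_signedInfDist_nonneg s hxs fun i ↦ ?_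
  have h := (abs_signedInfDist_sub_signedInfDist_le_dist s i x s.incenter).trans hx
  rw [s.signedInfDist_incenter] at h
  linarith [neg_le_of_abs_le h]

lemma div_le_inradius_of_forall_le_height (s : Affine.Simplex ℝ P n) {h : ℝ} (hh : 0 < h)
    (hs : ∀ i, h ≤ s.height i) : h / (n + 1) ≤ s.inradius := by
  have hpos := s.sum_excenterWeightsUnnorm_empty_pos
  have hsum : ∑ i, s.excenterWeightsUnnorm ∅ i ≤ (n + 1) / h := by
    calc ∑ i, s.excenterWeightsUnnorm ∅ i = ∑ i, (s.height i)⁻¹ := by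
          simp only [s.excenterWeightsUnnorm_empty_apply]
      _ ≤ ∑ _i : Fin (n + 1), h⁻¹ := by gcongr with i; exact hs i
      _ = (n + 1) / h := by simp [div_eq_mul_inv]
  rw [s.inradius_eq_abs_inv_sum, abs_of_pos (inv_pos.2 hpos), ← inv_div]
  exact inv_anti₀ hpos hsum

lemma mul_diam_le_two_mul_height (s : Affine.Simplex ℝ P n) {c : ℝ} (hc : 0 ≤ c) (i : Fin (n + 1))
    (hs : ∀ j, c * dist (s.points i) (s.points j) ≤ s.height i) :
    c * diam (range s.points) ≤ 2 * s.height i := by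
  obtain rfl | hc := hc.eq_or_lt
  · simpa only [zero_mul] using (mul_pos two_pos (s.height_pos i)).le
  rw [← le_div_iff₀' hc]
  refine diam_le_of_forall_dist_le (div_pos (mul_pos two_pos (s.height_pos i)) hc).le ?_
  rintro _ ⟨j, rfl⟩ _ ⟨k, rfl⟩
  rw [le_div_iff₀' hc]
  calc c * dist (s.points j) (s.points k)
      ≤ c * (dist (s.points i) (s.points j) + dist (s.points i) (s.points k)) := by
        gcongr
        exact dist_triangle_left _ _ _
    _ ≤ 2 * s.height i := by linarith [hs j, hs k]

end Simplex

lemma isFatBody_convexHull_simplex {V : Type*} [NormedAddCommGroup V] [InnerProductSpace ℝ V]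
    [FiniteDimensional ℝ V] {n : ℕ} [NeZero n] (hn : finrank ℝ V = n) (s : Affine.Simplex ℝ V n)
    {c : ℝ} (hc : 0 < c) (hs : ∀ i j, c * dist (s.points i) (s.points j) ≤ s.height i) :
    IsFatBody (c / (2 * (n + 1))) (convexHull ℝ (range s.points)) := by
  have hbdd : Bornology.IsBounded (range s.points) := (finite_range _).isBounded
  have hnt : (range s.points).Nontrivial :=
    image_univ ▸ nontrivial_univ.image s.independent.injective
  have hd : 0 < diam (range s.points) := Metric.diam_pos hnt hbdd
  have hradius : c / (2 * (n + 1)) * diam (convexHull ℝ (range s.points)) ≤ s.inradius := by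
    have hheight (i) : c * diam (range s.points) / 2 ≤ s.height i := by
      linarith [mul_diam_le_two_mul_height s hc.le i (hs i)]
    calc c / (2 * (n + 1)) * diam (convexHull ℝ (range s.points))
        = c * diam (range s.points) / 2 / (n + 1) := by rw [convexHull_diam]; field_simp
      _ ≤ s.inradius := div_le_inradius_of_forall_le_height s (by positivity) hheight
  have hspan : affineSpan ℝ (range s.points) = ⊤ :=
    s.independent.affineSpan_eq_top_iff_card_eq_finrank_add_one.2 (by simp [hn])
  refine ⟨convex_convexHull ℝ _, isBounded_convexHull.2 hbdd, hnt.mono (subset_convexHull ℝ _),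
    s.incenter, fun x hx ↦ ?_⟩
  rw [s.convexHull_eq_closedInterior]
  exact closedBall_incenter_inter_affineSpan_subset_closedInterior s
    ⟨closedBall_subset_closedBall hradius hx, hspan ▸ AffineSubspace.mem_top ℝ V x⟩

section Triangle

open InnerProductGeometry in
lemma sin_angle_mul_norm_le_norm_sub_smul {V : Type*} [NormedAddCommGroup V]
    [InnerProductSpace ℝ V] (x y : V) (c : ℝ) :
    Real.sin (angle x y) * ‖x‖ ≤ ‖x - c • y‖ := by
  have law_sin : Real.sin (angle x (c • y)) * ‖x‖ ≤ ‖x - c • y‖ := by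
    rw [sin_angle_mul_norm_eq_sin_angle_mul_norm]
    exact mul_le_of_le_one_left (norm_nonneg _) (Real.sin_le_one _)
  obtain hc | rfl | hc := lt_trichotomy c 0
  · rwa [angle_smul_right_of_neg _ _ hc, angle_neg_right, Real.sin_pi_sub] at law_sin
  · rw [zero_smul, sub_zero]
    exact mul_le_of_le_one_left (norm_nonneg _) (Real.sin_le_one _)
  · rwa [angle_smul_right_of_pos _ _ hc] at law_sin

variable {V P : Type*} [NormedAddCommGroup V] [InnerProductSpace ℝ V] [MetricSpace P]
  [NormedAddTorsor V P]

lemma sin_angle_mul_dist_le_dist {a b c q : P} (hq : q ∈ line[ℝ, b, c]) :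
    Real.sin (∠ a b c) * dist a b ≤ dist a q := by
  obtain ⟨r, rfl⟩ := mem_affineSpan_pair_iff_exists_lineMap_eq.1 hq
  have h := sin_angle_mul_norm_le_norm_sub_smul (a -ᵥ b) (c -ᵥ b) r
  rwa [← dist_eq_norm_vsub, ← AffineMap.lineMap_vsub_left, vsub_sub_vsub_cancel_right,
    ← dist_eq_norm_vsub] at h

lemma sin_angle_mul_dist_le_height (t : Affine.Triangle ℝ P) {i j k : Fin 3} (hij : i ≠ j)
    (hik : i ≠ k) (hjk : j ≠ k) :
    Real.sin (∠ (t.points i) (t.points j) (t.points k)) * dist (t.points i) (t.points j) ≤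
      t.height i := by
  refine sin_angle_mul_dist_le_dist ?_
  have hcompl : ({i}ᶜ : Set (Fin 3)) = {j, k} := by
    ext l
    simp only [mem_compl_iff, mem_singleton_iff, mem_insert_iff]
    lia
  simpa only [hcompl, image_pair] using t.altitudeFoot_mem_affineSpan_image_compl i

lemma sin_le_sin_of_le_of_le_pi_sub {a x : ℝ} (ha : -(π / 2) ≤ a) (hax : a ≤ x) (hxa : x ≤ π - a) :
    Real.sin a ≤ Real.sin x := by
  obtain h | h := le_total x (π / 2)
  · exact Real.sin_le_sin_of_le_of_le_pi_div_two ha h hax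
  · rw [← Real.sin_pi_sub x]
    exact Real.sin_le_sin_of_le_of_le_pi_div_two ha (by linarith) (by linarith)

lemma sin_mul_dist_le_height (t : Affine.Triangle ℝ P) {α : ℝ} (hα : 0 ≤ α)
    (ht : ∀ i j k, i ≠ j → i ≠ k → j ≠ k → α ≤ ∠ (t.points i) (t.points j) (t.points k))
    (i j : Fin 3) : Real.sin α * dist (t.points i) (t.points j) ≤ t.height i := by
  obtain rfl | hij := eq_or_ne i j
  · simpa only [dist_self, mul_zero] using (t.height_pos i).le
  obtain ⟨k, hik, hjk⟩ : ∃ k : Fin 3, i ≠ k ∧ j ≠ k := by decide +revert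
  have hangle : ∠ (t.points i) (t.points j) (t.points k) ≤ π - α := by
    have hsum := EuclideanGeometry.angle_add_angle_add_angle_eq_pi (t.points k)
      (t.independent.injective.ne hij.symm)
    have := ht j k i hjk hij.symm hik.symm
    have := EuclideanGeometry.angle_nonneg (t.points k) (t.points i) (t.points j)
    linarith
  calc Real.sin α * dist (t.points i) (t.points j)
      ≤ Real.sin (∠ (t.points i) (t.points j) (t.points k)) * dist (t.points i) (t.points j) := by
        gcongr
        exact sin_le_sin_of_le_of_le_pi_sub (by linarith [Real.pi_pos]) (ht i j k hij hik hjk)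
          hangle
    _ ≤ t.height i := sin_angle_mul_dist_le_height t hij hik hjk

end Triangle

lemma IsFatTriangle.exists_triangle {α : ℝ} {Δ : Set (EuclideanSpace ℝ (Fin 2))}
    (h : IsFatTriangle α Δ) : ∃ t : Affine.Triangle ℝ (EuclideanSpace ℝ (Fin 2)),
      Δ = convexHull ℝ (range t.points) ∧
      ∀ i j k, i ≠ j → i ≠ k → j ≠ k → α ≤ ∠ (t.points i) (t.points j) (t.points k) := by
  obtain ⟨u, v, w, hind, rfl, hu, hv, hw⟩ := h
  have hrange : range ![u, v, w] = {u, v, w} := by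
    simp only [Matrix.range_cons, Matrix.range_empty, union_empty, singleton_union]
  refine ⟨⟨![u, v, w], hind⟩, by rw [hrange], fun i j k ↦ ?_⟩
  have := EuclideanGeometry.angle_comm w u v
  have := EuclideanGeometry.angle_comm u v w
  have := EuclideanGeometry.angle_comm v w u
  fin_cases i <;> fin_cases j <;> fin_cases k <;> simp_all

lemma IsFatTriangle.isFatBody {α : ℝ} (hα : 0 < α) (hαπ : α < π)
    {Δ : Set (EuclideanSpace ℝ (Fin 2))} (h : IsFatTriangle α Δ) :
    IsFatBody (Real.sin α / 6) Δ := by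
  obtain ⟨t, rfl, ht⟩ := h.exists_triangle
  have hconst : Real.sin α / 6 = Real.sin α / (2 * ((2 : ℕ) + 1)) := by norm_num
  rw [hconst]
  exact isFatBody_convexHull_simplex finrank_euclideanSpace_fin t
    (Real.sin_pos_of_pos_of_lt_pi hα hαπ) (sin_mul_dist_le_height t hα.le ht)

theorem stmt8_general {E : Type*} [NormedAddCommGroup E] [NormedSpace ℝ E] [FiniteDimensional ℝ E]
    {ρ : ℝ} (hρ : 0 < ρ) :
    ∃ c : ℝ, 0 < c ∧
      ∀ {ι : Type*} [Fintype ι] [DecidableEq ι] (K : ι → Set E), (∀ i, IsFatBody ρ (K i)) →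
        ∀ (Part : Finpartition (Finset.univ : Finset ι)) (k : ℕ),
          (∀ x, (partsThrough K Part.parts x).ncard ≤ k) →
          ((meetingPairs K Part.parts).ncard : ℝ) ≤ c * Fintype.card ι * k := by
  classical
  have : ProperSpace E := FiniteDimensional.proper_real E
  obtain ⟨N, -, hNfin, hN⟩ := (isCompact_closedBall (0 : E) 2).finite_cover_balls hρ
  lift N to Finset E using hNfin
  refine ⟨N.card + 1, by positivity, fun {ι} _ _ K hK Part k hk ↦ ?_⟩
  choose p hp using fun i ↦ (hK i).nontrivial.nonempty
  have hit (i j : ι) (hij : diam (K i) ≤ diam (K j)) (hne : (K i ∩ K j).Nonempty) :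
      ∃ x ∈ N.image (fun y ↦ p i + diam (K i) • y), x ∈ K j := by
    obtain ⟨z, hzi, hzj⟩ := hne
    obtain ⟨y, hy, hyj⟩ := (hK j).exists_add_smul_mem hρ.le hN (hK i).diam_pos hij hzj
      (dist_le_diam_of_mem (hK i).isBounded hzi (hp i))
    exact ⟨_, Finset.mem_image_of_mem _ hy, hyj⟩
  calc ((meetingPairs K Part.parts).ncard : ℝ) ≤ (Fintype.card ι * (N.card * k) : ℕ) :=
        mod_cast ncard_meetingPairs_le Part hit (fun _ ↦ Finset.card_image_le) hk
    _ = N.card * Fintype.card ι * k := by push_cast; ring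
    _ ≤ (N.card + 1) * Fintype.card ι * k := by gcongr; exact (lt_add_one _).le

theorem stmt8 (α : ℝ) (hα0 : 0 < α) (hα : α ≤ Real.pi / 3) :
    ∃ c : ℝ, 0 < c ∧
      ∀ (n : ℕ), 1 ≤ n →
        ∀ (Δ : Fin n → Set (EuclideanSpace ℝ (Fin 2))),
          (∀ i, IsFatTriangle α (Δ i)) →
          ∀ Part : Finpartition (Finset.univ : Finset (Fin n)),
            (∀ P ∈ Part.parts, ∃ x : EuclideanSpace ℝ (Fin 2), ∀ i ∈ P, x ∈ Δ i) →
            ∀ k : ℕ,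
              (∀ x : EuclideanSpace ℝ (Fin 2),
                ({P : Finset (Fin n) | P ∈ Part.parts ∧ ∃ i ∈ P, x ∈ Δ i}).ncard ≤ k) →
              (({q : Sym2 (Finset (Fin n)) | ∃ P ∈ Part.parts, ∃ P' ∈ Part.parts,
                  q = s(P, P') ∧ P ≠ P' ∧
                  ((⋃ i ∈ P, Δ i) ∩ ⋃ i ∈ P', Δ i).Nonempty}).ncard : ℝ)
                ≤ c * n * k := by
  have hαπ : α < π := by linarith [Real.pi_pos]
  obtain ⟨c, hc, h⟩ := stmt8_general (E := EuclideanSpace ℝ (Fin 2))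
    (div_pos (Real.sin_pos_of_pos_of_lt_pi hα0 hαπ) (by norm_num : (0 : ℝ) < 6))
  exact ⟨c, hc, fun n _ Δ hΔ Part _ k hk ↦ by
    simpa only [meetingPairs, Fintype.card_fin] using
      h Δ (fun i ↦ (hΔ i).isFatBody hα0 hαπ) Part k hk⟩
end

section
/- Let c, p, c', p' be points in the Euclidean plane ℝ², let r = dist(c, p) and r' = dist(c', p'). If the closed segments [c, p] and [c', p'] have a common point, then dist(c', p) ≤ r' or dist(c, p') ≤ r. Equivalently: if p lies on the boundary of the closed disk D with center c and radius r, p' lies on the boundary of the closed disk D' with center c' and radius r', and the segment from c to p intersects the segment from c' to p', then p ∈ D' or p' ∈ D. -/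
/-!
Let `x` be a common point of the two segments. Since `x` lies on the radius `[c, p]`, the disk
around `x` through `p` is contained in the disk around `c` through `p`; likewise for `c'` and `p'`.
Of the two disks around `x`, the larger one contains both `p` and `p'`.
-/

theorem dist_le_dist_of_dist_add_dist_le {α : Type*} [PseudoMetricSpace α] {c p q x : α}
    (hx : dist c x + dist x p ≤ dist c p) (hq : dist x q ≤ dist x p) : dist c q ≤ dist c p :=
  calc
    dist c q ≤ dist c x + dist x q := dist_triangle c x q
    _ ≤ dist c x + dist x p := by gcongr
    _ ≤ dist c p := hx

theorem dist_le_dist_of_mem_segment {E : Type*} [SeminormedAddCommGroup E] [NormedSpace ℝ E]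
    {c p q x : E} (hx : x ∈ segment ℝ c p) (hq : dist x q ≤ dist x p) : dist c q ≤ dist c p :=
  dist_le_dist_of_dist_add_dist_le (dist_add_dist_of_mem_segment hx).le hq

theorem stmt9_general {E : Type*} [SeminormedAddCommGroup E] [NormedSpace ℝ E] {c p c' p' : E}
    (h : (segment ℝ c p ∩ segment ℝ c' p').Nonempty) :
    dist c' p ≤ dist c' p' ∨ dist c p' ≤ dist c p := by
  obtain ⟨x, hx, hx'⟩ := h
  exact (le_total (dist x p) (dist x p')).imp
    (dist_le_dist_of_mem_segment hx') (dist_le_dist_of_mem_segment hx)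

theorem stmt9 (c p c' p' : EuclideanSpace ℝ (Fin 2))
    (h : (segment ℝ c p ∩ segment ℝ c' p').Nonempty) :
    dist c' p ≤ dist c' p' ∨ dist c p' ≤ dist c p :=
  stmt9_general h
end

section
/- Let (D_i)_{i ∈ I} be a finite family of closed disks in ℝ² with |I| = n, and suppose that every point x ∈ ℝ² is contained in at most k of the disks. Then the number of unordered pairs {i, j} of distinct indices with D_i ∩ D_j ≠ ∅ is at most 9 · k · n. -/
open Metric

/-!
Charge every intersecting pair of balls to the one of smaller radius. If `B(y, t)` meets `B(x, s)`
and `s ≤ t`, then `B(y, t)` contains a ball of radius `s` that lies inside `B(x, 3s)`. The balls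
obtained this way from all the larger neighbours of `B(x, s)` still cover every point at most `k`
times, and in dimension `d` each has a fraction `3⁻ᵈ` of the volume of `B(x, 3s)`, so there are at
most `3ᵈ k` of them.
-/

open MeasureTheory Module

section IntersectionGraph

variable {α ι : Type*}

/-- The intersection graph of a family of sets: two distinct indices are adjacent if the
corresponding sets meet. Its edges are the intersecting pairs to be counted. -/
def intersectionGraph (S : ι → Set α) : SimpleGraph ι where
  Adj i j := i ≠ j ∧ (S i ∩ S j).Nonempty
  symm := ⟨fun i j h => ⟨h.1.symm, Set.inter_comm (S i) (S j) ▸ h.2⟩⟩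
  loopless := ⟨fun _ h => h.1 rfl⟩

lemma edgeSet_intersectionGraph (S : ι → Set α) :
    (intersectionGraph S).edgeSet =
      {q | ∃ i j, q = s(i, j) ∧ i ≠ j ∧ (S i ∩ S j).Nonempty} := by
  ext q
  refine ⟨?_, ?_⟩
  · induction q with | h i j => exact fun h => ⟨i, j, rfl, h⟩
  · rintro ⟨i, j, rfl, h⟩
    exact h

end IntersectionGraph

lemma ncard_edgeSet_le_of_orientation {V : Type*} [Finite V] {G : SimpleGraph V}
    {R : V → V → Prop} {m : ℕ} (hR : ∀ ⦃v w⦄, G.Adj v w → R v w ∨ R w v)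
    (hm : ∀ v, {w | R v w}.ncard ≤ m) : G.edgeSet.ncard ≤ m * Nat.card V := by
  cases nonempty_fintype V
  have hcover : G.edgeSet ⊆ ⋃ v, (fun w => s(v, w)) '' {w | R v w} := by
    intro q hq
    induction q with | h v w =>
    rw [Set.mem_iUnion]
    rcases hR hq with hvw | hwv
    · exact ⟨v, w, hvw, rfl⟩
    · exact ⟨w, v, hwv, Sym2.eq_swap⟩
  calc G.edgeSet.ncard
      ≤ (⋃ v, (fun w => s(v, w)) '' {w | R v w}).ncard := Set.ncard_le_ncard hcover
    _ ≤ ∑ v, ((fun w => s(v, w)) '' {w | R v w}).ncard := Set.ncard_iUnion_le_of_fintype _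
    _ ≤ ∑ _v : V, m := Finset.sum_le_sum fun v _ => (Set.ncard_image_le).trans (hm v)
    _ = m * Nat.card V := by simp [mul_comm]

lemma sum_measure_le_mul_of_ncard_le {α ι : Type*} [MeasurableSpace α] [Fintype ι]
    {μ : Measure α} {S : ι → Set α} {B : Set α} {k : ℕ} (hS : ∀ i, NullMeasurableSet (S i) μ)
    (hSB : ∀ i, S i ⊆ B) (hk : ∀ x, {i | x ∈ S i}.ncard ≤ k) : ∑ i, μ (S i) ≤ k * μ B := by
  classical
  have hpointwise (x : α) :
      ∑ i, (S i).indicator 1 x ≤ B.indicator (fun _ => (k : ENNReal)) x := by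
    by_cases hx : x ∈ B
    · have hcount : ∑ i, (S i).indicator (1 : α → ENNReal) x = {i | x ∈ S i}.ncard := by
        simp [Set.indicator_apply, Set.ncard_eq_toFinset_card']
      rw [hcount, Set.indicator_of_mem hx]
      exact_mod_cast hk x
    · have hzero (i : ι) : (S i).indicator (1 : α → ENNReal) x = 0 :=
        Set.indicator_of_notMem (fun hi => hx (hSB i hi)) _
      simp [hzero]
  calc ∑ i, μ (S i)
      = ∑ i, ∫⁻ x, (S i).indicator 1 x ∂μ := by simp only [lintegral_indicator_one₀ (hS _)]
    _ = ∫⁻ x, ∑ i, (S i).indicator 1 x ∂μ :=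
        (lintegral_finsetSum' _ fun i _ => aemeasurable_one.indicator₀ (hS i)).symm
    _ ≤ ∫⁻ x, B.indicator (fun _ => (k : ENNReal)) x ∂μ := lintegral_mono hpointwise
    _ ≤ k * μ B := lintegral_indicator_const_le B k

section Balls

variable {E ι : Type*} [NormedAddCommGroup E] [NormedSpace ℝ E]

lemma exists_closedBall_subset_of_inter_nonempty {x y : E} {s t : ℝ} (hst : s ≤ t)
    (h : (closedBall x s ∩ closedBall y t).Nonempty) :
    ∃ c, closedBall c s ⊆ closedBall x (3 * s) ∧ closedBall c s ⊆ closedBall y t := by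
  have hs : 0 ≤ s := nonempty_closedBall.1 h.left
  obtain ⟨z, hzx, hzy⟩ := h
  have hxy : dist x y ≤ (t - s) + 2 * s := by
    linarith [dist_triangle_left x y z, mem_closedBall.1 hzx, mem_closedBall.1 hzy]
  obtain ⟨c, hxc, hcy⟩ := exists_dist_le_le (by linarith) (by linarith) hxy
  exact ⟨c, closedBall_subset_closedBall' (by linarith [dist_comm x c]),
    closedBall_subset_closedBall' (by linarith)⟩

variable [FiniteDimensional ℝ E] [Finite ι]

lemma natCard_le_of_closedBall_subset {c : ι → E} {x : E} {s : ℝ} {m k : ℕ} (hs : 0 < s)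
    (hsub : ∀ i, closedBall (c i) s ⊆ closedBall x (m * s))
    (hk : ∀ y, {i | y ∈ closedBall (c i) s}.ncard ≤ k) :
    Nat.card ι ≤ m ^ finrank ℝ E * k := by
  borelize E
  cases nonempty_fintype ι
  let μ : Measure E := Measure.addHaar
  have hvolume : (Nat.card ι : ENNReal) * μ (closedBall 0 s) ≤
      (m ^ finrank ℝ E * k : ℕ) * μ (closedBall 0 s) :=
    calc (Nat.card ι : ENNReal) * μ (closedBall 0 s)
        = ∑ i, μ (closedBall (c i) s) := by simp [Measure.addHaar_closedBall_center]
      _ ≤ k * μ (closedBall x (m * s)) :=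
          sum_measure_le_mul_of_ncard_le (fun _ => measurableSet_closedBall.nullMeasurableSet)
            hsub hk
      _ = k * (m ^ finrank ℝ E * μ (closedBall 0 s)) := by
          rw [Measure.addHaar_closedBall_mul μ x m.cast_nonneg hs.le,
            ENNReal.ofReal_pow m.cast_nonneg, ENNReal.ofReal_natCast]
      _ = (m ^ finrank ℝ E * k : ℕ) * μ (closedBall 0 s) := by push_cast; ring
  exact_mod_cast (ENNReal.mul_le_mul_iff_left (measure_closedBall_pos μ 0 hs).ne'
    measure_closedBall_lt_top.ne).1 hvolume

variable {k : ℕ} {a : ι → E} {r : ι → ℝ}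

lemma ncard_larger_closedBall_inter_nonempty_le
    (hply : ∀ x, {i | x ∈ closedBall (a i) (r i)}.ncard ≤ k) (x : E) {s : ℝ} (hs : 0 < s) :
    {j | s ≤ r j ∧ (closedBall x s ∩ closedBall (a j) (r j)).Nonempty}.ncard ≤
      3 ^ finrank ℝ E * k := by
  set J := {j | s ≤ r j ∧ (closedBall x s ∩ closedBall (a j) (r j)).Nonempty}
  choose c hcx hca using fun j : J => exists_closedBall_subset_of_inter_nonempty j.2.1 j.2.2
  have hply_c (y : E) : {j | y ∈ closedBall (c j) s}.ncard ≤ k :=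
    (Set.ncard_le_ncard_of_injOn Subtype.val (fun j hj => hca j hj)
      Subtype.val_injective.injOn).trans (hply y)
  exact natCard_le_of_closedBall_subset hs (by exact_mod_cast hcx) hply_c

theorem stmt10_general (hr : ∀ i, 0 < r i)
    (hply : ∀ x, {i | x ∈ closedBall (a i) (r i)}.ncard ≤ k) :
    (intersectionGraph fun i => closedBall (a i) (r i)).edgeSet.ncard ≤
      3 ^ finrank ℝ E * k * Nat.card ι := by
  refine ncard_edgeSet_le_of_orientation (fun i j hij => ?_)
    fun i => ncard_larger_closedBall_inter_nonempty_le hply (a i) (hr i)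
  rcases le_total (r i) (r j) with h | h
  · exact .inl ⟨h, hij.2⟩
  · exact .inr ⟨h, hij.symm.2⟩

end Balls

theorem stmt10 (n k : ℕ) (a : Fin n → EuclideanSpace ℝ (Fin 2)) (r : Fin n → ℝ)
    (hr : ∀ i, 0 < r i)
    (hply : ∀ x : EuclideanSpace ℝ (Fin 2),
      ({i : Fin n | x ∈ closedBall (a i) (r i)}).ncard ≤ k) :
    ({q : Sym2 (Fin n) | ∃ i j : Fin n, q = s(i, j) ∧ i ≠ j ∧
        (closedBall (a i) (r i) ∩ closedBall (a j) (r j)).Nonempty}).ncard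
      ≤ 9 * k * n := by
  simpa [edgeSet_intersectionGraph] using stmt10_general hr hply
end

section
/- There exists a natural number K with the following property: for every s > 0 and every closed axis-parallel square σ = [a, a+s] × [b, b+s] in ℝ², there is a finite set Q ⊆ ℝ² with |Q| ≤ K such that every closed disk D of radius at least s/12 that intersects the topological boundary of σ contains at least one point of Q. -/
/-!
Let `S` have diameter at most `d`, and put `ρ = ε * d`. A ball of radius at least `ρ` through a
point `x ∈ S` contains a ball of radius `ρ` whose center is within `ρ` of `x`: slide from `x`
towards the center. Hence every such ball meets a given `ρ`-net of the `ρ`-neighbourhood of `S`.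
That neighbourhood lies in a ball of radius `d * (1 + ε)`, which is the image under a homothety
of ratio `d` of the ball of radius `1 + ε` about the origin, so a finite `ε`-net of this one
ball yields the required nets for all `S` and `d` at once. A square of side `s` has diameter
`√2 * s`.
-/

open Metric Set
open scoped NNReal Pointwise

section SeminormedSpace

variable {E : Type*} [SeminormedAddCommGroup E]

lemma isCover_vadd_smul {𝕜 : Type*} [NormedField 𝕜] [NormedSpace 𝕜 E] {A N : Set E} {ε : ℝ≥0}
    (hN : IsCover ε A N) (t : 𝕜) (x : E) : IsCover (‖t‖₊ * ε) (x +ᵥ t • A) (x +ᵥ t • N) :=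
  ((isometry_vadd E x).isCover_image_iff _).2 (hN.image_lipschitz (lipschitzWith_smul t))

variable [NormedSpace ℝ E]

lemma exists_dist_le_closedBall_subset_closedBall {x c : E} {r ρ : ℝ} (hρ : 0 ≤ ρ) (hr : ρ ≤ r)
    (hx : x ∈ closedBall c r) : ∃ z, dist x z ≤ ρ ∧ closedBall z ρ ⊆ closedBall c r := by
  have hxc : dist x c ≤ (r - ρ) + ρ := by simpa using hx
  obtain ⟨z, hxz, hzc⟩ := exists_dist_le_le hρ (sub_nonneg.2 hr) hxc
  exact ⟨z, hxz, closedBall_subset_closedBall' (by linarith)⟩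

lemma exists_mem_closedBall_of_isCover_cthickening {S Q : Set E} {ρ : ℝ≥0} {c : E} {r : ℝ}
    (hQ : IsCover ρ (cthickening ρ S) Q) (hr : ρ ≤ r) (hS : (closedBall c r ∩ S).Nonempty) :
    ∃ q ∈ Q, q ∈ closedBall c r := by
  obtain ⟨x, hxc, hxS⟩ := hS
  obtain ⟨z, hxz, hz⟩ := exists_dist_le_closedBall_subset_closedBall ρ.2 hr hxc
  have hzS : z ∈ cthickening ρ S := mem_cthickening_of_dist_le z x ρ S hxS (by rwa [dist_comm])
  obtain ⟨q, hqQ, hzq⟩ := mem_iUnion₂.1 (hQ.subset_iUnion_closedBall hzS)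
  exact ⟨q, hqQ, hz (mem_closedBall_comm.1 hzq)⟩

end SeminormedSpace

section ProperSpace

variable {E : Type*} [NormedAddCommGroup E] [NormedSpace ℝ E] [ProperSpace E]

lemma exists_card_le_isCover_closedBall (R : ℝ≥0) {ε : ℝ≥0} (hε : ε ≠ 0) :
    ∃ K : ℕ, ∀ (t : ℝ≥0) (x : E), ∃ Q : Finset E, Q.card ≤ K ∧
      IsCover (t * ε) (closedBall x (t * R)) (Q : Set E) := by
  classical
  obtain ⟨N, -, hN, hcover⟩ :=
    exists_finite_isCover_of_isCompact hε (isCompact_closedBall (0 : E) R)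
  lift N to Finset E using hN
  refine ⟨N.card, fun t x => ⟨x +ᵥ (t : ℝ) • N, ?_, ?_⟩⟩
  · exact (Finset.card_vadd_finset x _).trans_le Finset.card_image_le
  · have hball : x +ᵥ (t : ℝ) • closedBall (0 : E) R = closedBall x (t * R) := by
      simp [_root_.smul_closedBall]
    simpa [← hball] using isCover_vadd_smul hcover (t : ℝ) x

theorem stmt11_general {ε : ℝ} (hε : 0 < ε) :
    ∃ K : ℕ, ∀ (d : ℝ) (S : Set E), (∀ x ∈ S, ∀ y ∈ S, dist x y ≤ d) →
      ∃ Q : Finset E, Q.card ≤ K ∧ ∀ (c : E) (r : ℝ), ε * d ≤ r →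
        (closedBall c r ∩ S).Nonempty → ∃ q ∈ Q, q ∈ closedBall c r := by
  lift ε to ℝ≥0 using hε.le
  obtain ⟨K, hK⟩ := exists_card_le_isCover_closedBall (E := E) (1 + ε) (NNReal.coe_pos.1 hε).ne'
  refine ⟨K, fun d S hS => ?_⟩
  obtain rfl | ⟨x, hx⟩ := S.eq_empty_or_nonempty
  · exact ⟨∅, by simp⟩
  lift d to ℝ≥0 using dist_nonneg.trans (hS x hx x hx)
  obtain ⟨Q, hQK, hQ⟩ := hK d x
  have hthick : cthickening (d * ε : ℝ≥0) S ⊆ closedBall x (d * (1 + ε : ℝ≥0)) :=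
    calc cthickening (d * ε : ℝ≥0) S
      _ ⊆ cthickening (d * ε : ℝ≥0) (closedBall x d) :=
        cthickening_subset_of_subset _ fun y hy => hS y hy x hx
      _ = closedBall x (d * (1 + ε : ℝ≥0)) := by
        rw [cthickening_closedBall (NNReal.coe_nonneg _) (NNReal.coe_nonneg d)]
        congr 1
        push_cast
        ring
  refine ⟨Q, hQK, fun c r hr => exists_mem_closedBall_of_isCover_cthickening (hQ.anti hthick) ?_⟩
  simpa [mul_comm] using hr

end ProperSpace

lemma euclideanSpace_dist_le_sqrt_card_mul {ι : Type*} [Fintype ι] {x y : EuclideanSpace ℝ ι}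
    {s : ℝ} (hs : 0 ≤ s) (h : ∀ i, dist (x i) (y i) ≤ s) :
    dist x y ≤ √(Fintype.card ι) * s := by
  rw [EuclideanSpace.dist_eq]
  calc √(∑ i, dist (x i) (y i) ^ 2)
    _ ≤ √(∑ _i : ι, s ^ 2) := by gcongr with i; exact h i
    _ = √(Fintype.card ι) * s := by simp [Real.sqrt_sq hs]

lemma isClosed_euclideanPlane_Icc_Icc (a a' b b' : ℝ) :
    IsClosed {x : EuclideanSpace ℝ (Fin 2) | x 0 ∈ Icc a a' ∧ x 1 ∈ Icc b b'} :=
  (isClosed_Icc.preimage (by fun_prop)).inter (isClosed_Icc.preimage (by fun_prop))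

lemma dist_le_sqrt_two_mul_of_mem_frontier_square {a b s : ℝ} (hs : 0 ≤ s) :
    ∀ x ∈ frontier {x : EuclideanSpace ℝ (Fin 2) | x 0 ∈ Icc a (a + s) ∧ x 1 ∈ Icc b (b + s)},
    ∀ y ∈ frontier {x : EuclideanSpace ℝ (Fin 2) | x 0 ∈ Icc a (a + s) ∧ x 1 ∈ Icc b (b + s)},
      dist x y ≤ √2 * s := by
  intro x hx y hy
  obtain ⟨hx₀, hx₁⟩ := (isClosed_euclideanPlane_Icc_Icc _ _ _ _).frontier_subset hx
  obtain ⟨hy₀, hy₁⟩ := (isClosed_euclideanPlane_Icc_Icc _ _ _ _).frontier_subset hy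
  have hcoord : ∀ i, dist (x i) (y i) ≤ s := Fin.forall_fin_two.2
    ⟨by simpa using Real.dist_le_of_mem_Icc hx₀ hy₀, by simpa using Real.dist_le_of_mem_Icc hx₁ hy₁⟩
  simpa using euclideanSpace_dist_le_sqrt_card_mul hs hcoord

theorem stmt11 :
    ∃ K : ℕ, ∀ s : ℝ, 0 < s → ∀ a b : ℝ,
      ∃ Q : Finset (EuclideanSpace ℝ (Fin 2)), Q.card ≤ K ∧
        ∀ (c : EuclideanSpace ℝ (Fin 2)) (r : ℝ), s / 12 ≤ r →
          (Metric.closedBall c r ∩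
              frontier {x : EuclideanSpace ℝ (Fin 2) |
                x 0 ∈ Set.Icc a (a + s) ∧ x 1 ∈ Set.Icc b (b + s)}).Nonempty →
          ∃ q ∈ Q, q ∈ Metric.closedBall c r := by
  have hratio (s : ℝ) : (12 * √2)⁻¹ * (√2 * s) = s / 12 := by field_simp
  obtain ⟨K, hK⟩ :=
    stmt11_general (E := EuclideanSpace ℝ (Fin 2)) (ε := (12 * √2)⁻¹) (by positivity)
  exact ⟨K, fun s hs a b => by
    simpa only [hratio] using hK (√2 * s) _ (dist_le_sqrt_two_mul_of_mem_frontier_square hs.le)⟩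
end

section
/- Let α satisfy 0 < α ≤ π/3 and let Δ be an α-fat triangle with vertices u, v, w. Then the vertex v admits a canonical chord: there exist a point q on the closed segment [u, w] (the edge of Δ opposite v), a real t > 0, and an integer i with 0 ≤ i ≤ ⌊4π/α⌋, such that q − v = t · (cos(i·α/2), sin(i·α/2)). -/
/-!
Seen from `v`, the edge `[u, w]` fills the arc of directions between those of `u - v` and `w - v`,
whose length is the angle `θ < π` at `v`. If these directions are `ψ` and `ψ - θ`, and `e φ` is the
unit vector of direction `φ`, then for `0 ≤ δ < θ` the identity
`sin θ • e (ψ - δ) = sin (θ - δ) • e ψ + sin δ • e (ψ - θ)`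
exhibits a positive multiple of `e (ψ - δ)` in the cone spanned by the two edges at `v`.
Consecutive canonical directions are `α / 2` apart. Rounding the endpoint `ψ ∈ [0, 2π)` of the arc
down to a multiple of `α / 2` keeps the index within range, and the result stays in the arc as soon
as `α / 2 ≤ θ`.
-/

/-- The `i`-th canonical direction: the unit vector making angle `i·α/2` with the
positive `x`-axis. -/
noncomputable def canonicalDir (α : ℝ) (i : ℤ) : EuclideanSpace ℝ (Fin 2) :=
  (EuclideanSpace.equiv (Fin 2) ℝ).symm
    ![Real.cos ((i : ℝ) * (α / 2)), Real.sin ((i : ℝ) * (α / 2))]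

/-- The unit vector of the plane with direction `φ`. Taking `φ` in `Real.Angle` builds the
periodicity into the type. -/
noncomputable def unitDir (φ : Real.Angle) : EuclideanSpace ℝ (Fin 2) :=
  !₂[φ.cos, φ.sin]

lemma canonicalDir_eq_unitDir (α : ℝ) (i : ℤ) :
    canonicalDir α i = unitDir ((i * (α / 2) : ℝ) : Real.Angle) := rfl

@[simp] lemma unitDir_apply_zero (φ : Real.Angle) : unitDir φ 0 = φ.cos := rfl

@[simp] lemma unitDir_apply_one (φ : Real.Angle) : unitDir φ 1 = φ.sin := rfl

lemma norm_unitDir (φ : Real.Angle) : ‖unitDir φ‖ = 1 := by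
  simp [EuclideanSpace.norm_eq]

lemma inner_unitDir_unitDir (φ χ : Real.Angle) :
    inner ℝ (unitDir φ) (unitDir χ) = (φ - χ).cos := by
  simp [PiLp.inner_apply, sub_eq_add_neg, Real.Angle.cos_add, mul_comm]

lemma cos_angle_smul_unitDir {r s : ℝ} (hr : 0 < r) (hs : 0 < s) (φ χ : Real.Angle) :
    Real.cos (InnerProductGeometry.angle (r • unitDir φ) (s • unitDir χ)) = (φ - χ).cos := by
  rw [InnerProductGeometry.angle_smul_left_of_pos _ _ hr,
    InnerProductGeometry.angle_smul_right_of_pos _ _ hs,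
    ← InnerProductGeometry.inner_eq_cos_angle_of_norm_eq_one (norm_unitDir φ) (norm_unitDir χ),
    inner_unitDir_unitDir]

lemma exists_eq_norm_smul_unitDir (a : EuclideanSpace ℝ (Fin 2)) :
    ∃ φ : Real.Angle, a = ‖a‖ • unitDir φ := by
  let z : ℂ := Complex.orthonormalBasisOneI.repr.symm a
  have hz : Complex.orthonormalBasisOneI.repr z = a :=
    LinearIsometryEquiv.apply_symm_apply _ a
  refine ⟨z.arg, ?_⟩
  rw [← hz, LinearIsometryEquiv.norm_map]
  ext j
  fin_cases j <;> simp [Complex.norm_mul_cos_arg, Complex.norm_mul_sin_arg]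

lemma sin_smul_unitDir_sub (ψ θ δ : Real.Angle) :
    θ.sin • unitDir (ψ - δ) = (θ - δ).sin • unitDir ψ + δ.sin • unitDir (ψ - θ) := by
  ext j
  fin_cases j
  · suffices θ.sin * (ψ - δ).cos = (θ - δ).sin * ψ.cos + δ.sin * (ψ - θ).cos by simpa
    simp only [sub_eq_add_neg, Real.Angle.cos_add, Real.Angle.sin_add, Real.Angle.cos_neg,
      Real.Angle.sin_neg]
    ring
  · suffices θ.sin * (ψ - δ).sin = (θ - δ).sin * ψ.sin + δ.sin * (ψ - θ).sin by simpa
    simp only [sub_eq_add_neg, Real.Angle.sin_add, Real.Angle.cos_neg, Real.Angle.sin_neg]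
    ring

lemma exists_int_mul_coe_angle_eq_sub {β : ℝ} (hβ : 0 < β) (ψ : Real.Angle) :
    ∃ i : ℤ, 0 ≤ i ∧ i ≤ ⌊2 * Real.pi / β⌋ ∧
      ∃ δ ∈ Set.Ico 0 β, ((i * β : ℝ) : Real.Angle) = ψ - (δ : ℝ) := by
  induction ψ using Real.Angle.induction_on with | _ x =>
  rw [← Real.Angle.coe_toIcoMod x 0]
  obtain ⟨hx₀, hx⟩ := toIcoMod_mem_Ico' Real.two_pi_pos x
  set y := toIcoMod Real.two_pi_pos 0 x
  refine ⟨⌊y / β⌋, Int.floor_nonneg.2 (by positivity), by gcongr, y - ⌊y / β⌋ * β,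
    ⟨Int.sub_floor_div_mul_nonneg y hβ, Int.sub_floor_div_mul_lt y hβ⟩, ?_⟩
  rw [← Real.Angle.coe_sub, sub_sub_cancel]

lemma exists_mem_segment_sub_eq_smul {𝕜 E : Type*} [Field 𝕜] [LinearOrder 𝕜]
    [IsStrictOrderedRing 𝕜] [AddCommGroup E] [Module 𝕜 E] {u v w : E} {a b : 𝕜}
    (ha : 0 ≤ a) (hb : 0 ≤ b) (hab : 0 < a + b) :
    ∃ q ∈ segment 𝕜 u w, ∃ t : 𝕜, 0 < t ∧ q - v = t • (a • (u - v) + b • (w - v)) := by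
  refine ⟨_, mem_segment_iff_div.2 ⟨a, b, ha, hb, hab, rfl⟩, (a + b)⁻¹, inv_pos.2 hab, ?_⟩
  match_scalars
  · field_simp
  · field_simp
  · field_simp
    ring

section Triangle

open EuclideanGeometry

variable {u v w : EuclideanSpace ℝ (Fin 2)}

lemma exists_mem_segment_sub_eq_smul_unitDir {r s θ δ : ℝ} {ψ : Real.Angle} (hr : 0 < r)
    (hs : 0 < s) (hθ : θ < Real.pi) (hδ : δ ∈ Set.Ico 0 θ) (hu : u - v = r • unitDir ψ)
    (hw : w - v = s • unitDir (ψ - θ)) :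
    ∃ q ∈ segment ℝ u w, ∃ t : ℝ, 0 < t ∧ q - v = t • unitDir (ψ - δ) := by
  obtain ⟨hδ₀, hδθ⟩ := hδ
  have hsinθ : 0 < Real.sin θ := Real.sin_pos_of_pos_of_lt_pi (by linarith) hθ
  have hsinθδ : 0 < Real.sin (θ - δ) := Real.sin_pos_of_pos_of_lt_pi (by linarith) (by linarith)
  have hsinδ : 0 ≤ Real.sin δ := Real.sin_nonneg_of_nonneg_of_le_pi hδ₀ (by linarith)
  have hcomb : (s * Real.sin (θ - δ)) • (u - v) + (r * Real.sin δ) • (w - v) =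
      (r * s * Real.sin θ) • unitDir (ψ - δ) := by
    have hsin := sin_smul_unitDir_sub ψ θ δ
    rw [← Real.Angle.coe_sub, Real.Angle.sin_coe, Real.Angle.sin_coe, Real.Angle.sin_coe] at hsin
    rw [hu, hw, mul_smul (r * s), hsin]
    module
  obtain ⟨q, hq, t, ht, hqv⟩ := exists_mem_segment_sub_eq_smul (u := u) (v := v) (w := w)
    (mul_pos hs hsinθδ).le (mul_nonneg hr.le hsinδ) (by positivity)
  exact ⟨q, hq, t * (r * s * Real.sin θ), by positivity, by rw [hqv, hcomb, smul_smul]⟩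

lemma exists_arc_forall_exists_mem_segment (h : ¬Collinear ℝ {u, v, w}) :
    ∃ ψ : Real.Angle, ∀ δ ∈ Set.Ico 0 (∠ u v w),
      ∃ q ∈ segment ℝ u w, ∃ t : ℝ, 0 < t ∧ q - v = t • unitDir (ψ - (δ : ℝ)) := by
  have hπ : ∠ u v w < Real.pi := angle_lt_pi_of_not_collinear h
  have hu : 0 < ‖u - v‖ := norm_sub_pos_iff.2 (ne₁₂_of_not_collinear h)
  have hw : 0 < ‖w - v‖ := norm_sub_pos_iff.2 (ne₂₃_of_not_collinear h).symm
  obtain ⟨φ, hφ⟩ := exists_eq_norm_smul_unitDir (u - v)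
  obtain ⟨χ, hχ⟩ := exists_eq_norm_smul_unitDir (w - v)
  have hcos : (φ - χ).cos = Real.cos (∠ u v w) := by
    rw [← cos_angle_smul_unitDir hu hw, ← hφ, ← hχ, angle, vsub_eq_sub, vsub_eq_sub]
  obtain hφχ | hφχ := Real.Angle.cos_eq_real_cos_iff_eq_or_eq_neg.1 hcos
  · have hχφ : χ = φ - ∠ u v w := by rw [← hφχ, sub_sub_cancel]
    exact ⟨φ, fun δ hδ ↦ exists_mem_segment_sub_eq_smul_unitDir hu hw hπ hδ hφ (hχφ ▸ hχ)⟩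
  · have hφχ' : φ = χ - ∠ u v w := by rw [sub_eq_add_neg, ← hφχ, add_sub_cancel]
    rw [segment_symm]
    exact ⟨χ, fun δ hδ ↦ exists_mem_segment_sub_eq_smul_unitDir hw hu hπ hδ hχ (hφχ' ▸ hφ)⟩

end Triangle

theorem stmt15_general (α : ℝ) (hα0 : 0 < α) (u v w : EuclideanSpace ℝ (Fin 2))
    (hind : AffineIndependent ℝ ![u, v, w])
    (h : α / 2 ≤ EuclideanGeometry.angle u v w) :
    ∃ q ∈ segment ℝ u w, ∃ t : ℝ, 0 < t ∧ ∃ i : ℤ,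
      0 ≤ i ∧ i ≤ ⌊4 * Real.pi / α⌋ ∧ q - v = t • canonicalDir α i := by
  obtain ⟨ψ, hψ⟩ :=
    exists_arc_forall_exists_mem_segment (affineIndependent_iff_not_collinear_set.1 hind)
  obtain ⟨i, hi₀, hi, δ, ⟨hδ₀, hδ⟩, hiδ⟩ := exists_int_mul_coe_angle_eq_sub (half_pos hα0) ψ
  obtain ⟨q, hq, t, ht, hqv⟩ := hψ δ ⟨hδ₀, hδ.trans_le h⟩
  have hfloor : 2 * Real.pi / (α / 2) = 4 * Real.pi / α := by
    field_simp
    norm_num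
  exact ⟨q, hq, t, ht, i, hi₀, hfloor ▸ hi, by rw [hqv, canonicalDir_eq_unitDir, hiδ]⟩

theorem stmt15 (α : ℝ) (hα0 : 0 < α) (hα : α ≤ Real.pi / 3)
    (u v w : EuclideanSpace ℝ (Fin 2))
    (hind : AffineIndependent ℝ ![u, v, w])
    (h1 : α ≤ EuclideanGeometry.angle w u v)
    (h2 : α ≤ EuclideanGeometry.angle u v w)
    (h3 : α ≤ EuclideanGeometry.angle v w u) :
    ∃ q ∈ segment ℝ u w, ∃ t : ℝ, 0 < t ∧ ∃ i : ℤ,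
      0 ≤ i ∧ i ≤ ⌊4 * Real.pi / α⌋ ∧ q - v = t • canonicalDir α i := by
  exact stmt15_general α hα0 u v w hind (by linarith)
end

section
/- Let α satisfy 0 < α ≤ π/3, and let Δ and Δ' be α-fat triangles in ℝ². For each vertex v of Δ fix a canonical chord s_v of Δ at v, and for each vertex v' of Δ' fix a canonical chord s'_{v'} of Δ' at v'; let S(Δ) and S(Δ') be the resulting sets of three chords, and let P(Δ) be the set consisting of the three vertices of Δ together with the endpoints of the chords in S(Δ). If Δ ∩ Δ' ≠ ∅, then at least one of the following holds: (i) some vertex of Δ' lies in Δ; (ii) some point of P(Δ) lies in Δ'; (iii) some chord in S(Δ) intersects some chord in S(Δ'). -/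
/-- `q` is the foot of a canonical chord of a triangle at the vertex `v`, where the
edge opposite to `v` is the segment `[a, b]`: it lies on that edge and `q - v` is a
positive multiple of a canonical direction. The chord itself is `[v, q]`. -/
noncomputable def IsChordFoot (α : ℝ) (v a b q : EuclideanSpace ℝ (Fin 2)) : Prop :=
  q ∈ segment ℝ a b ∧ ∃ t : ℝ, 0 < t ∧ ∃ i : ℤ,
    0 ≤ i ∧ i ≤ ⌊4 * Real.pi / α⌋ ∧ q - v = t • canonicalDir α i

section Triangle

open Set Convex

theorem sum_coord_of_triangle {𝕜 V P : Type*} [Ring 𝕜] [AddCommGroup V] [Module 𝕜 V]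
    [AddTorsor V P] (b : AffineBasis (Fin 3) 𝕜 P) {i j k : Fin 3} (hij : i ≠ j) (hik : i ≠ k)
    (hjk : j ≠ k) (x : P) : b.coord i x + b.coord j x + b.coord k x = 1 := by
  have huniv : (Finset.univ : Finset (Fin 3)) = {i, j, k} := by decide +revert
  have := b.sum_coord_apply_eq_one x
  rwa [huniv, Finset.sum_insert (by simp [hij, hik]), Finset.sum_pair hjk, ← add_assoc] at this

variable {ι 𝕜 E : Type*} [Field 𝕜] [LinearOrder 𝕜] [AddCommGroup E] [Module 𝕜 E]

theorem coord_eq_zero_of_mem_convexHull_image_compl (b : AffineBasis ι 𝕜 E) {i : ι} {x : E}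
    (hx : x ∈ convexHull 𝕜 (b '' {i}ᶜ)) : b.coord i x = 0 := by
  refine convexHull_min ?_ ((convex_singleton (0 : 𝕜)).affine_preimage (b.coord i)) hx
  rintro _ ⟨j, hj, rfl⟩
  exact b.coord_apply_ne (Ne.symm hj)

variable [IsStrictOrderedRing 𝕜]

theorem exists_mem_segment_eq_zero (f : E →ᵃ[𝕜] 𝕜) {x y : E} (hx : f x ≤ 0) (hy : 0 ≤ f y) :
    ∃ z ∈ [x -[𝕜] y], f z = 0 := by
  have h : (0 : 𝕜) ∈ [f x -[𝕜] f y] := segment_eq_Icc (hx.trans hy) ▸ ⟨hx, hy⟩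
  rwa [← image_segment 𝕜 f] at h

theorem exists_nonneg_of_mem_convexHull (f : E →ᵃ[𝕜] 𝕜) {S : Set E} {x : E}
    (hx : x ∈ convexHull 𝕜 S) (hfx : 0 ≤ f x) : ∃ y ∈ S, 0 ≤ f y := by
  by_contra! hneg
  have hfx' : f x < 0 := convexHull_min hneg ((convex_Iio 0).affine_preimage f) hx
  exact hfx'.not_ge hfx

theorem exists_mem_segment_forall_nonneg_and_eq_zero [Finite ι] (f : ι → E →ᵃ[𝕜] 𝕜) {x y : E}
    (hx : ∀ i, 0 ≤ f i x) (hy : ∃ i, f i y < 0) :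
    ∃ z ∈ [x -[𝕜] y], (∀ i, 0 ≤ f i z) ∧ ∃ i, f i y < 0 ∧ f i z = 0 := by
  -- Among the `f i` that are negative at `y`, choose one that vanishes first on the way from `x`.
  let τ (i : ι) : 𝕜 := f i x / (f i x - f i y)
  obtain ⟨i, hi : f i y < 0, hmin⟩ := exists_min_image {i | f i y < 0} τ (toFinite _) hy
  have hτ : τ i ∈ Icc 0 1 := by
    have := hx i
    exact ⟨div_nonneg this (by linarith), (div_le_one (by linarith)).2 (by linarith)⟩
  have hf (j : ι) : f j (AffineMap.lineMap x y (τ i)) = f j x - τ i * (f j x - f j y) := by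
    rw [AffineMap.apply_lineMap, AffineMap.lineMap_apply_ring']
    ring
  refine ⟨AffineMap.lineMap x y (τ i), segment_eq_image_lineMap 𝕜 x y ▸ mem_image_of_mem _ hτ,
    fun j ↦ ?_, i, hi, ?_⟩
  · rcases lt_or_ge (f j y) 0 with hj | hj
    · have := (le_div_iff₀ (by linarith [hx j])).1 (hmin j hj)
      linarith [hf j]
    · rw [AffineMap.apply_lineMap]
      exact (convex_Ici 0).lineMap_mem (hx j) hj hτ
  · have := hx i
    rw [hf, div_mul_cancel₀ _ (by linarith), sub_self]

theorem mem_convexHull_range_basis_iff (b : AffineBasis ι 𝕜 E) {x : E} :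
    x ∈ convexHull 𝕜 (range b) ↔ ∀ i, 0 ≤ b.coord i x := by
  rw [b.convexHull_eq_nonneg_coord, mem_ofPred_eq]

theorem exists_ne_facets_inter_convexHull [Finite ι] (b : AffineBasis ι 𝕜 E) {S : Set E}
    (hS : Disjoint S (convexHull 𝕜 (range b)))
    (hmeet : (convexHull 𝕜 S ∩ convexHull 𝕜 (range b)).Nonempty) :
    ∃ j k, j ≠ k ∧ (∃ x ∈ convexHull 𝕜 S ∩ convexHull 𝕜 (range b), b.coord j x = 0) ∧
      ∃ y ∈ convexHull 𝕜 S ∩ convexHull 𝕜 (range b), b.coord k y = 0 := by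
  obtain ⟨p, hpS, hp⟩ := hmeet
  rw [mem_convexHull_range_basis_iff] at hp
  -- Leave the simplex towards a point of `S` which is on the inner side of the facet `i`.
  have hfacet (i : ι) : ∃ j, j ≠ i ∧
      ∃ x ∈ convexHull 𝕜 S ∩ convexHull 𝕜 (range b), b.coord j x = 0 := by
    obtain ⟨s, hs, his⟩ := exists_nonneg_of_mem_convexHull (b.coord i) hpS (hp i)
    have hneg : ∃ j, b.coord j s < 0 := by
      simpa [mem_convexHull_range_basis_iff] using hS.notMem_of_mem_left hs
    obtain ⟨x, hx, hx0, j, hj, hjx⟩ :=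
      exists_mem_segment_forall_nonneg_and_eq_zero b.coord hp hneg
    have hxS := (convex_convexHull 𝕜 S).segment_subset hpS (subset_convexHull 𝕜 S hs) hx
    exact ⟨j, by rintro rfl; exact hj.not_ge his, x,
      ⟨hxS, (mem_convexHull_range_basis_iff b).2 hx0⟩, hjx⟩
  obtain ⟨i⟩ := b.nonempty
  obtain ⟨j, -, hj⟩ := hfacet i
  obtain ⟨k, hkj, hk⟩ := hfacet j
  exact ⟨j, k, hkj.symm, hj, hk⟩

theorem mem_segment_basis_of_forall_coord_eq_mul [Finite ι] (b : AffineBasis ι 𝕜 E) {i : ι}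
    {q z : E} (hz : z ∈ convexHull 𝕜 (range b)) (hiq : b.coord i q = 0)
    (hzq : ∀ j ≠ i, b.coord j z = (1 - b.coord i z) * b.coord j q) : z ∈ [b i -[𝕜] q] := by
  have := Fintype.ofFinite ι
  rw [mem_convexHull_range_basis_iff] at hz
  have hiz : b.coord i z ≤ 1 := b.sum_coord_apply_eq_one z ▸
    Finset.single_le_sum (fun j _ ↦ hz j) (Finset.mem_univ i)
  have hzt : z = AffineMap.lineMap (b i) q (1 - b.coord i z) := b.ext_elem fun j ↦ by
    rw [AffineMap.apply_lineMap, AffineMap.lineMap_apply_ring']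
    rcases eq_or_ne j i with rfl | hj
    · rw [b.coord_apply_eq, hiq]
      ring
    · rw [b.coord_apply_ne hj, hzq j hj]
      ring
  rw [segment_eq_image_lineMap]
  exact ⟨1 - b.coord i z, ⟨by linarith, by linarith [hz i]⟩, hzt.symm⟩

theorem segment_inter_segment_nonempty_of_mem_edges (b : AffineBasis (Fin 3) 𝕜 E)
    {i j k : Fin 3} (hij : i ≠ j) (hik : i ≠ k) (hjk : j ≠ k) {q x y : E}
    (hq : q ∈ convexHull 𝕜 (b '' {i}ᶜ))
    (hx : x ∈ convexHull 𝕜 (range b)) (hjx : b.coord j x = 0)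
    (hy : y ∈ convexHull 𝕜 (range b)) (hky : b.coord k y = 0) :
    ([x -[𝕜] y] ∩ [b i -[𝕜] q]).Nonempty := by
  have hiq := coord_eq_zero_of_mem_convexHull_image_compl b hq
  have hq0 := (mem_convexHull_range_basis_iff b).1 (convexHull_mono (image_subset_range _ _) hq)
  -- The zero set of `f` is the line through `b i` and `q`.
  let f : E →ᵃ[𝕜] 𝕜 := b.coord k q • b.coord j - b.coord j q • b.coord k
  have hf (z : E) : f z = b.coord k q * b.coord j z - b.coord j q * b.coord k z := rfl
  have hfx : f x ≤ 0 := by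
    have := mul_nonneg (hq0 j) ((mem_convexHull_range_basis_iff b).1 hx k)
    rw [hf, hjx]
    linarith
  have hfy : 0 ≤ f y := by
    have := mul_nonneg (hq0 k) ((mem_convexHull_range_basis_iff b).1 hy j)
    rw [hf, hky]
    linarith
  obtain ⟨z, hz, hfz⟩ := exists_mem_segment_eq_zero f hfx hfy
  have hzb := (convex_convexHull 𝕜 _).segment_subset hx hy hz
  refine ⟨z, hz, mem_segment_basis_of_forall_coord_eq_mul b hzb hiq fun l hl ↦ ?_⟩
  have hsumq := sum_coord_of_triangle b hij hik hjk q
  have hsumz := sum_coord_of_triangle b hij hik hjk z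
  rw [hf] at hfz
  obtain rfl | rfl : l = j ∨ l = k := by lia
  · linear_combination hfz + b.coord l q * hsumz - b.coord l z * (hsumq - hiq)
  · linear_combination -hfz + b.coord l q * hsumz - b.coord l z * (hsumq - hiq)

theorem exists_convexHull_inter_chord_nonempty (b : AffineBasis (Fin 3) 𝕜 E) {q : Fin 3 → E}
    (hq : ∀ i, q i ∈ convexHull 𝕜 (b '' {i}ᶜ)) {S : Set E}
    (hS : Disjoint S (convexHull 𝕜 (range b)))
    (hmeet : (convexHull 𝕜 S ∩ convexHull 𝕜 (range b)).Nonempty) :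
    ∃ i, (convexHull 𝕜 S ∩ [b i -[𝕜] q i]).Nonempty := by
  obtain ⟨j, k, hjk, ⟨x, ⟨hxS, hx⟩, hjx⟩, y, ⟨hyS, hy⟩, hky⟩ :=
    exists_ne_facets_inter_convexHull b hS hmeet
  obtain ⟨i, hij, hik⟩ : ∃ i, i ≠ j ∧ i ≠ k := by
    clear * -
    decide +revert
  exact ⟨i, (segment_inter_segment_nonempty_of_mem_edges b hij hik hjk (hq i) hx hjx hy hky).mono
    (inter_subset_inter_left _ ((convex_convexHull 𝕜 S).segment_subset hxS hyS))⟩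

theorem range_vec_three {β : Type*} (u v w : β) : range ![u, v, w] = {u, v, w} := by
  ext x
  simp [Fin.exists_fin_succ, eq_comm, -Matrix.range_cons]

theorem forall_mem_convexHull_image_compl_iff {u v w a b c : E} :
    (∀ i, ![a, b, c] i ∈ convexHull 𝕜 (![u, v, w] '' {i}ᶜ)) ↔
      a ∈ [v -[𝕜] w] ∧ b ∈ [u -[𝕜] w] ∧ c ∈ [u -[𝕜] v] := by
  have h0 : ({0}ᶜ : Set (Fin 3)) = {1, 2} := by ext i; fin_cases i <;> simp
  have h1 : ({1}ᶜ : Set (Fin 3)) = {0, 2} := by ext i; fin_cases i <;> simp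
  have h2 : ({2}ᶜ : Set (Fin 3)) = {0, 1} := by ext i; fin_cases i <;> simp
  simp [Fin.forall_fin_succ, h0, h1, h2, image_pair]

theorem stmt16_general (hE : Module.finrank 𝕜 E = 2) {p p' q q' : Fin 3 → E}
    (hp : AffineIndependent 𝕜 p) (hp' : AffineIndependent 𝕜 p')
    (hq : ∀ i, q i ∈ convexHull 𝕜 (p '' {i}ᶜ)) (hq' : ∀ i, q' i ∈ convexHull 𝕜 (p' '' {i}ᶜ))
    (hmeet : (convexHull 𝕜 (range p) ∩ convexHull 𝕜 (range p')).Nonempty) :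
    (∃ i, p' i ∈ convexHull 𝕜 (range p)) ∨
      ((∃ i, p i ∈ convexHull 𝕜 (range p')) ∨ ∃ i, q i ∈ convexHull 𝕜 (range p')) ∨
      ∃ i j, ([p i -[𝕜] q i] ∩ [p' j -[𝕜] q' j]).Nonempty := by
  by_contra! h
  obtain ⟨hp'_out, ⟨hp_out, hq_out⟩, hchords⟩ := h
  have : FiniteDimensional 𝕜 E := .of_finrank_pos (by lia)
  have hspan {r : Fin 3 → E} (hr : AffineIndependent 𝕜 r) : affineSpan 𝕜 (range r) = ⊤ :=
    hr.affineSpan_eq_top_iff_card_eq_finrank_add_one.2 (by simp [hE])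
  obtain ⟨i, hi⟩ := exists_convexHull_inter_chord_nonempty ⟨p, hp, hspan hp⟩ hq
    (disjoint_left.2 <| forall_mem_range.2 hp'_out) (inter_comm _ _ ▸ hmeet)
  have hS : Disjoint {p i, q i} (convexHull 𝕜 (range p')) := by
    simpa [disjoint_left] using ⟨hp_out i, hq_out i⟩
  obtain ⟨j, hj⟩ := exists_convexHull_inter_chord_nonempty ⟨p', hp', hspan hp'⟩ hq'
    hS (by rwa [convexHull_pair, inter_comm])
  rw [convexHull_pair] at hj
  exact hj.ne_empty (hchords i j)

end Triangle

theorem stmt16 (α : ℝ) (hα0 : 0 < α) (hα : α ≤ Real.pi / 3)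
    (u v w u' v' w' : EuclideanSpace ℝ (Fin 2))
    (hind : AffineIndependent ℝ ![u, v, w])
    (h1 : α ≤ EuclideanGeometry.angle w u v)
    (h2 : α ≤ EuclideanGeometry.angle u v w)
    (h3 : α ≤ EuclideanGeometry.angle v w u)
    (hind' : AffineIndependent ℝ ![u', v', w'])
    (h1' : α ≤ EuclideanGeometry.angle w' u' v')
    (h2' : α ≤ EuclideanGeometry.angle u' v' w')
    (h3' : α ≤ EuclideanGeometry.angle v' w' u')
    (qu qv qw qu' qv' qw' : EuclideanSpace ℝ (Fin 2))
    (hqu : IsChordFoot α u v w qu) (hqv : IsChordFoot α v u w qv)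
    (hqw : IsChordFoot α w u v qw)
    (hqu' : IsChordFoot α u' v' w' qu') (hqv' : IsChordFoot α v' u' w' qv')
    (hqw' : IsChordFoot α w' u' v' qw')
    (hmeet : ((convexHull ℝ {u, v, w} : Set (EuclideanSpace ℝ (Fin 2))) ∩
        convexHull ℝ {u', v', w'}).Nonempty) :
    (u' ∈ (convexHull ℝ {u, v, w} : Set (EuclideanSpace ℝ (Fin 2))) ∨
      v' ∈ (convexHull ℝ {u, v, w} : Set (EuclideanSpace ℝ (Fin 2))) ∨
      w' ∈ (convexHull ℝ {u, v, w} : Set (EuclideanSpace ℝ (Fin 2)))) ∨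
    (∃ x ∈ ({u, v, w, qu, qv, qw} : Set (EuclideanSpace ℝ (Fin 2))),
      x ∈ (convexHull ℝ {u', v', w'} : Set (EuclideanSpace ℝ (Fin 2)))) ∨
    (∃ s₁ ∈ ({segment ℝ u qu, segment ℝ v qv, segment ℝ w qw} :
        Set (Set (EuclideanSpace ℝ (Fin 2)))),
      ∃ s₂ ∈ ({segment ℝ u' qu', segment ℝ v' qv', segment ℝ w' qw'} :
        Set (Set (EuclideanSpace ℝ (Fin 2)))),
      (s₁ ∩ s₂).Nonempty) := by
  simpa [Fin.exists_fin_succ, range_vec_three, -Matrix.range_cons, or_assoc, hmeet] using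
    stmt16_general (𝕜 := ℝ) (by simp) hind hind'
      (forall_mem_convexHull_image_compl_iff.2 ⟨hqu.1, hqv.1, hqw.1⟩)
      (forall_mem_convexHull_image_compl_iff.2 ⟨hqu'.1, hqv'.1, hqw'.1⟩)
end

section
/- Let α satisfy 0 < α ≤ π/3 and let Δ be an α-fat triangle in ℝ². Then there exist at most four triangles T₁, …, T_k (k ≤ 4), each the convex hull of three affinely independent points, such that the interiors of the T_m are pairwise disjoint, the union T₁ ∪ … ∪ T_k equals Δ, and each T_m is semi-canonical, i.e. at least two of the three edges of T_m are parallel to canonical directions. -/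
/-- The edge with endpoints `a` and `b` is parallel to a canonical direction. -/
def EdgeCanonical (α : ℝ) (a b : EuclideanSpace ℝ (Fin 2)) : Prop :=
  ∃ t : ℝ, t ≠ 0 ∧ ∃ i : ℤ, 0 ≤ i ∧ i ≤ ⌊4 * Real.pi / α⌋ ∧
    b - a = t • canonicalDir α i

open InnerProductGeometry Real
open scoped EuclideanGeometry

local notation "ℝ²" => EuclideanSpace ℝ (Fin 2)

/-! ### Splitting a triangle by a segment from a vertex -/

section OrderedField

variable {𝕜 E : Type*} [Field 𝕜] [LinearOrder 𝕜] [IsStrictOrderedRing 𝕜] [AddCommGroup E]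
  [Module 𝕜 E] {u v p w : E}

theorem segment_union_segment_of_wbtw (h : Wbtw 𝕜 v p w) :
    segment 𝕜 v p ∪ segment 𝕜 p w = segment 𝕜 v w := by
  ext x
  simp only [Set.mem_union, mem_segment_iff_wbtw]
  refine ⟨fun hx => hx.elim h.trans_left h.trans_right, fun hx => ?_⟩
  obtain ⟨a, ha, rfl⟩ := id hx
  obtain ⟨b, hb, rfl⟩ := id h
  exact (wbtw_or_wbtw_smul_vadd_of_nonneg v (w -ᵥ v) ha.1 hb.1).imp_right hx.trans_left_right

theorem convexHull_union_convexHull_of_wbtw (u : E) (h : Wbtw 𝕜 v p w) :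
    convexHull 𝕜 {u, v, p} ∪ convexHull 𝕜 {u, p, w} = convexHull 𝕜 {u, v, w} := by
  simp only [convexHull_insert (Set.insert_nonempty _ _), convexHull_pair,
    ← convexJoin_union_right, segment_union_segment_of_wbtw h]

theorem not_collinear_of_sbtw (h : Sbtw 𝕜 v p w) (hcol : ¬Collinear 𝕜 {u, v, w}) :
    ¬Collinear 𝕜 {u, v, p} := by
  have hw : w ∈ affineSpan 𝕜 {u, v, p} :=
    affineSpan_mono 𝕜 (Set.subset_insert _ _) (h.wbtw.right_mem_affineSpan_of_left_ne h.left_ne)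
  refine fun hp => hcol (((collinear_insert_iff_of_mem_affineSpan hw).2 hp).subset ?_)
  grind

theorem exists_linearMap_eq_lt_of_not_collinear (hcol : ¬Collinear 𝕜 {u, p, w}) :
    ∃ f : E →ₗ[𝕜] 𝕜, f p = f u ∧ f u < f w := by
  have hw : w - u ∉ Submodule.span 𝕜 {p - u} := by
    rw [Submodule.mem_span_singleton]
    rintro ⟨t, ht⟩
    refine hcol ((collinear_iff_of_mem (p₀ := u) (by simp)).2 ⟨p - u, ?_⟩)
    rintro x (rfl | rfl | rfl)
    exacts [⟨0, by simp⟩, ⟨1, by simp⟩, ⟨t, by simp [ht]⟩]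
  obtain ⟨f, hf, hfw⟩ :=
    LinearMap.exists_extend_of_notMem (0 : Submodule.span 𝕜 {p - u} →ₗ[𝕜] 𝕜) hw 1
  have hfp : f (p - u) = 0 := by
    simpa using LinearMap.congr_fun hf ⟨p - u, Submodule.mem_span_singleton_self _⟩
  rw [map_sub] at hfp hfw
  exact ⟨f, by linarith, by linarith⟩

end OrderedField

section Interior

variable {E : Type*} [AddCommGroup E] [Module ℝ E] [TopologicalSpace E] [IsTopologicalAddGroup E]
  [ContinuousSMul ℝ E]

theorem disjoint_interior_of_map_le_of_le_map {f : E →L[ℝ] ℝ} (hf : f ≠ 0) {c : ℝ} {s t : Set E}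
    (hs : s ⊆ f ⁻¹' Set.Iic c) (ht : t ⊆ f ⁻¹' Set.Ici c) :
    Disjoint (interior s) (interior t) := by
  have hopen : IsOpenMap f := f.isOpenMap_of_ne_zero hf
  have hlt : interior s ⊆ f ⁻¹' Set.Iio c := by
    rw [← interior_Iic]
    exact (interior_mono hs).trans hopen.interior_preimage_subset_preimage_interior
  have hgt : interior t ⊆ f ⁻¹' Set.Ioi c := by
    rw [← interior_Ici]
    exact (interior_mono ht).trans hopen.interior_preimage_subset_preimage_interior
  exact ((Set.Iio_disjoint_Ioi_of_le le_rfl).preimage f).mono hlt hgt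

theorem disjoint_interior_convexHull_of_sbtw [T2Space E] [FiniteDimensional ℝ E] {u v p w : E}
    (h : Sbtw ℝ v p w) (hcol : ¬Collinear ℝ {u, v, w}) :
    Disjoint (interior (convexHull ℝ {u, v, p})) (interior (convexHull ℝ {u, p, w})) := by
  have hcol' : ¬Collinear ℝ {u, p, w} := by
    rw [Set.pair_comm] at hcol ⊢
    exact not_collinear_of_sbtw h.symm hcol
  obtain ⟨f, hp, hw⟩ := exists_linearMap_eq_lt_of_not_collinear hcol'
  have hv : f v < f u := by
    obtain ⟨t, ⟨ht0, ht1⟩, rfl⟩ := h.mem_image_Ioo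
    simp only [AffineMap.lineMap_apply_module, map_add, map_smul, smul_eq_mul] at hp
    nlinarith
  refine disjoint_interior_of_map_le_of_le_map (f := f.toContinuousLinearMap) (c := f u) ?_
    (convexHull_min ?_ ((convex_Iic _).is_linear_preimage f.isLinear))
    (convexHull_min ?_ ((convex_Ici _).is_linear_preimage f.isLinear))
  · intro hf
    have hwu : f w - f u = 0 := by simpa using DFunLike.congr_fun hf (w - u)
    linarith
  · simp [Set.insert_subset_iff, hv.le, hp]
  · simp [Set.insert_subset_iff, hw.le, hp]

end Interior

/-! ### Dissections -/

/-- `S` is the union of `n` sets with property `P` whose interiors are pairwise disjoint. -/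
def HasDissection {X : Type*} [TopologicalSpace X] (P : Set X → Prop) (n : ℕ) (S : Set X) : Prop :=
  ∃ T : Fin n → Set X, (∀ i, P (T i)) ∧
    (∀ i j, i ≠ j → Disjoint (interior (T i)) (interior (T j))) ∧ ⋃ i, T i = S

namespace HasDissection

variable {X : Type*} [TopologicalSpace X] {P : Set X → Prop} {m n : ℕ} {S S' : Set X}

theorem of_prop (h : P S) : HasDissection P 1 S :=
  ⟨fun _ => S, fun _ => h, fun i j hij => (hij (Subsingleton.elim i j)).elim, Set.iUnion_const S⟩

theorem union (h : HasDissection P m S) (h' : HasDissection P n S')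
    (hdisj : Disjoint (interior S) (interior S')) : HasDissection P (m + n) (S ∪ S') := by
  obtain ⟨T, hP, hT, rfl⟩ := h
  obtain ⟨T', hP', hT', rfl⟩ := h'
  have hTT' (i j) : Disjoint (interior (T i)) (interior (T' j)) :=
    hdisj.mono (interior_mono (Set.subset_iUnion T i)) (interior_mono (Set.subset_iUnion T' j))
  refine ⟨Fin.append T T', ?_, ?_, ?_⟩
  · simpa [Fin.forall_fin_add] using ⟨hP, hP'⟩
  · simp only [Fin.forall_fin_add, Fin.append_left, Fin.append_right]
    exact ⟨fun i => ⟨fun j hij => hT i j (by grind), fun j _ => hTT' i j⟩,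
      fun i => ⟨fun j _ => (hTT' j i).symm, fun j hij => hT' i j (by grind)⟩⟩
  · rw [← finSumFinEquiv.surjective.iUnion_comp, Set.iUnion_sum]
    simp only [finSumFinEquiv_apply_left, finSumFinEquiv_apply_right, Fin.append_left,
      Fin.append_right]

theorem convexHull_of_sbtw {E : Type*} [AddCommGroup E] [Module ℝ E] [TopologicalSpace E]
    [IsTopologicalAddGroup E] [ContinuousSMul ℝ E] [T2Space E] [FiniteDimensional ℝ E]
    {P : Set E → Prop} {u v p w : E} (h : Sbtw ℝ v p w) (hcol : ¬Collinear ℝ {u, v, w})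
    (hv : HasDissection P m (convexHull ℝ {u, v, p}))
    (hw : HasDissection P n (convexHull ℝ {u, p, w})) :
    HasDissection P (m + n) (convexHull ℝ {u, v, w}) := by
  rw [← convexHull_union_convexHull_of_wbtw u h.wbtw]
  exact hv.union hw (disjoint_interior_convexHull_of_sbtw h hcol)

end HasDissection

/-! ### Canonical directions in a sector -/

/-- The unit vector at angle `θ` from the positive `x`-axis, used to express canonical directions
and edge vectors in polar coordinates. -/
noncomputable def unitVec (θ : ℝ) : ℝ² := !₂[cos θ, sin θ]

theorem canonicalDir_eq_unitVec (α : ℝ) (i : ℤ) : canonicalDir α i = unitVec (i * (α / 2)) := rfl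

theorem exists_eq_smul_unitVec (x : ℝ²) : ∃ r θ : ℝ, 0 ≤ θ ∧ θ ≤ π ∧ x = r • unitVec θ := by
  set z : ℂ := ⟨x 0, x 1⟩
  have hcos : ‖z‖ * cos z.arg = x 0 := Complex.norm_mul_cos_arg z
  have hsin : ‖z‖ * sin z.arg = x 1 := Complex.norm_mul_sin_arg z
  rcases le_total 0 z.arg with h | h
  · refine ⟨‖z‖, z.arg, h, z.arg_le_pi, ?_⟩
    ext i
    fin_cases i <;> simp [unitVec, hcos, hsin]
  · refine ⟨-‖z‖, z.arg + π, by linarith [z.neg_pi_lt_arg], by linarith, ?_⟩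
    ext i
    fin_cases i <;> simp [unitVec, cos_add_pi, sin_add_pi, hcos, hsin]

theorem angle_unitVec {θ φ : ℝ} (hle : θ ≤ φ) (hpi : φ ≤ θ + π) :
    angle (unitVec θ) (unitVec φ) = φ - θ := by
  have hnorm (t : ℝ) : ‖unitVec t‖ = 1 := by simp [unitVec, EuclideanSpace.norm_eq]
  have hinner : inner ℝ (unitVec θ) (unitVec φ) = cos (φ - θ) := by
    simp [unitVec, PiLp.inner_apply, cos_sub]
  rw [angle, hnorm, hnorm, hinner, mul_one, div_one,
    arccos_cos (by linarith) (by linarith)]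

theorem sin_sub_smul_unitVec (θ γ φ : ℝ) :
    sin (φ - θ) • unitVec γ = sin (φ - γ) • unitVec θ + sin (γ - θ) • unitVec φ := by
  ext i
  fin_cases i <;> simp [unitVec, sin_sub] <;> ring

theorem exists_pos_smul_add_smul_eq_smul_unitVec {r s θ γ φ : ℝ} (hsin : sin (φ - θ) ≠ 0)
    (h : 0 < r * s * (sin (φ - γ) * sin (γ - θ))) :
    ∃ a b t : ℝ, 0 < a ∧ 0 < b ∧ t ≠ 0 ∧
      a • r • unitVec θ + b • s • unitVec φ = t • unitVec γ := by
  have hr : r ≠ 0 := by rintro rfl; simp at h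
  have hs : s ≠ 0 := by rintro rfl; simp at h
  have hγ : sin (φ - γ) ≠ 0 := fun h0 => by simp [h0] at h
  -- Scaling `sin_sub_smul_unitVec` by `r * s ^ 2 * sin (φ - γ)` makes the coefficient of
  -- `r • unitVec θ` a square.
  refine ⟨(s * sin (φ - γ)) ^ 2, r * s * (sin (φ - γ) * sin (γ - θ)),
    r * s ^ 2 * sin (φ - γ) * sin (φ - θ), by positivity, h, by positivity, ?_⟩
  rw [mul_smul _ (sin (φ - θ)), sin_sub_smul_unitVec θ γ φ]
  module

theorem angle_smul_smul_of_mul_pos {V : Type*} [NormedAddCommGroup V] [InnerProductSpace ℝ V]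
    {r s : ℝ} (h : 0 < r * s) (x y : V) : angle (r • x) (s • y) = angle x y := by
  rcases pos_and_pos_or_neg_and_neg_of_mul_pos h with ⟨hr, hs⟩ | ⟨hr, hs⟩
  · rw [angle_smul_left_of_pos _ _ hr, angle_smul_right_of_pos _ _ hs]
  · rw [angle_smul_left_of_neg _ _ hr, angle_smul_right_of_neg _ _ hs, angle_neg_neg]

theorem angle_smul_smul_of_mul_neg {V : Type*} [NormedAddCommGroup V] [InnerProductSpace ℝ V]
    {r s : ℝ} (h : r * s < 0) (x y : V) : angle (r • x) (s • y) = π - angle x y := by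
  rw [← angle_neg_right, ← neg_smul_neg s y, angle_smul_smul_of_mul_pos (by linarith)]

theorem exists_canonical_angle {α θ : ℝ} (hα0 : 0 < α) (hα : α ≤ 2 * π) (hθ0 : 0 ≤ θ)
    (hθ : θ ≤ π) :
    ∃ i : ℤ, 0 ≤ i ∧ i ≤ ⌊4 * π / α⌋ ∧ θ < i * (α / 2) ∧ i * (α / 2) ≤ θ + α / 2 := by
  obtain ⟨k, ⟨hk, hk'⟩, -⟩ := existsUnique_zsmul_near_of_pos (half_pos hα0) θ
  simp only [zsmul_eq_mul, Int.cast_add, Int.cast_one] at hk hk'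
  refine ⟨k + 1, ?_, ?_, by push_cast; linarith, by push_cast; linarith⟩
  · have hpos : (0 : ℝ) < (k + 1 : ℤ) := by
      push_cast
      exact pos_of_mul_pos_left (hθ0.trans_lt hk') (by positivity)
    exact_mod_cast hpos.le
  · rw [Int.le_floor, le_div_iff₀ hα0]
    push_cast
    linarith

theorem exists_pos_smul_add_smul_eq_smul_canonicalDir {α : ℝ} (hα0 : 0 < α) {x y : ℝ²}
    (hx : x ≠ 0) (hy : y ≠ 0) (hang : α / 2 < angle x y) (hpi : angle x y ≠ π) :
    ∃ a b t : ℝ, 0 < a ∧ 0 < b ∧ t ≠ 0 ∧ ∃ i : ℤ, 0 ≤ i ∧ i ≤ ⌊4 * π / α⌋ ∧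
      a • x + b • y = t • canonicalDir α i := by
  obtain ⟨r, θ, hθ0, hθ, rfl⟩ := exists_eq_smul_unitVec x
  obtain ⟨s, φ, hφ0, hφ, rfl⟩ := exists_eq_smul_unitVec y
  wlog hle : θ ≤ φ generalizing r s θ φ
  · obtain ⟨a, b, t, ha, hb, ht, i, hi0, hi, h⟩ := this s φ hφ0 hφ hy r θ hθ0 hθ hx
      (by rwa [angle_comm]) (by rwa [angle_comm]) (le_of_not_ge hle)
    exact ⟨b, a, t, hb, ha, ht, i, hi0, hi, by rwa [add_comm]⟩
  have hα : α ≤ 2 * π := by linarith [angle_le_pi (r • unitVec θ) (s • unitVec φ)]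
  have hlt : angle (r • unitVec θ) (s • unitVec φ) < π := (angle_le_pi _ _).lt_of_ne hpi
  have hφθ : angle (unitVec θ) (unitVec φ) = φ - θ := angle_unitVec hle (by linarith)
  have hrs : r * s ≠ 0 := mul_ne_zero (left_ne_zero_of_smul hx) (left_ne_zero_of_smul hy)
  suffices ∃ i : ℤ, 0 ≤ i ∧ i ≤ ⌊4 * π / α⌋ ∧ 0 < sin (φ - θ) ∧
      0 < r * s * (sin (φ - i * (α / 2)) * sin (i * (α / 2) - θ)) by
    obtain ⟨i, hi0, hi, hsin, h⟩ := this
    obtain ⟨a, b, t, ha, hb, ht, hab⟩ := exists_pos_smul_add_smul_eq_smul_unitVec hsin.ne' h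
    exact ⟨a, b, t, ha, hb, ht, i, hi0, hi, by rw [hab, canonicalDir_eq_unitVec]⟩
  -- The line at angle `γ` meets the open sector iff `θ < γ < φ` when `r` and `s` have the same
  -- sign, and iff `φ < γ < θ + π` when they have opposite signs.
  rcases lt_or_gt_of_ne hrs with hneg | hpos
  · rw [angle_smul_smul_of_mul_neg hneg, hφθ] at hang hlt
    obtain ⟨i, hi0, hi, hlo, hhi⟩ := exists_canonical_angle hα0 hα hφ0 hφ
    refine ⟨i, hi0, hi, sin_pos_of_pos_of_lt_pi (by linarith) (by linarith),
      mul_pos_of_neg_of_neg hneg (mul_neg_of_neg_of_pos ?_ ?_)⟩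
    · exact sin_neg_of_neg_of_neg_pi_lt (by linarith) (by linarith)
    · exact sin_pos_of_pos_of_lt_pi (by linarith) (by linarith)
  · rw [angle_smul_smul_of_mul_pos hpos, hφθ] at hang hlt
    obtain ⟨i, hi0, hi, hlo, hhi⟩ := exists_canonical_angle hα0 hα hθ0 hθ
    refine ⟨i, hi0, hi, sin_pos_of_pos_of_lt_pi (by linarith) hlt,
      mul_pos hpos (mul_pos ?_ ?_)⟩ <;>
    exact sin_pos_of_pos_of_lt_pi (by linarith) (by linarith)

theorem exists_sbtw_edgeCanonical {α : ℝ} (hα0 : 0 < α) {u v w : ℝ²}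
    (hcol : ¬Collinear ℝ {u, v, w}) (hang : α / 2 < ∠ v u w) :
    ∃ p, Sbtw ℝ v p w ∧ EdgeCanonical α u p := by
  rw [Set.insert_comm,
    EuclideanGeometry.collinear_iff_eq_or_eq_or_angle_eq_zero_or_angle_eq_pi] at hcol
  push Not at hcol
  obtain ⟨hvu, hwu, -, hpi⟩ := hcol
  obtain ⟨a, b, t, ha, hb, ht, i, hi0, hi, h⟩ := exists_pos_smul_add_smul_eq_smul_canonicalDir
    hα0 (sub_ne_zero.2 hvu) (sub_ne_zero.2 hwu) hang hpi
  have hab : 0 < a + b := add_pos ha hb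
  refine ⟨AffineMap.lineMap v w (b / (a + b)), ?_, t / (a + b), div_ne_zero ht hab.ne', i, hi0, hi,
    ?_⟩
  · refine sbtw_lineMap_iff.2 ⟨?_, div_pos hb hab, (div_lt_one hab).2 (by linarith)⟩
    rintro rfl
    rw [EuclideanGeometry.angle_self_of_ne hvu] at hang
    linarith
  · rw [div_eq_inv_mul t, mul_smul, ← h, AffineMap.lineMap_apply_module]
    match_scalars <;> field_simp <;> ring

/-! ### Semi-canonical dissections -/

namespace EdgeCanonical

variable {α : ℝ} {a b q : ℝ²}

theorem symm (h : EdgeCanonical α a b) : EdgeCanonical α b a := by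
  obtain ⟨t, ht, i, hi0, hi, h⟩ := h
  exact ⟨-t, neg_ne_zero.2 ht, i, hi0, hi, by rw [neg_smul, ← h, neg_sub]⟩

theorem of_sbtw (h : EdgeCanonical α a b) (hq : Sbtw ℝ a q b) : EdgeCanonical α a q := by
  obtain ⟨t, ht, i, hi0, hi, h⟩ := h
  obtain ⟨s, ⟨hs0, -⟩, rfl⟩ := hq.mem_image_Ioo
  refine ⟨s * t, mul_ne_zero hs0.ne' ht, i, hi0, hi, ?_⟩
  rw [mul_smul, ← h, AffineMap.lineMap_apply_module']
  module

end EdgeCanonical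

/-- A semi-canonical triangle, as a subset of the plane. Any two edges of a triangle share a vertex,
here called `a`. -/
def IsSemiCanonicalTriangle (α : ℝ) (T : Set ℝ²) : Prop :=
  ∃ a b c : ℝ², AffineIndependent ℝ ![a, b, c] ∧ EdgeCanonical α a b ∧ EdgeCanonical α a c ∧
    T = convexHull ℝ {a, b, c}

theorem hasDissection_two_of_edgeCanonical {α : ℝ} (hα0 : 0 < α) {u v p : ℝ²}
    (hcol : ¬Collinear ℝ {v, u, p}) (hup : EdgeCanonical α u p) (hang : α / 2 < ∠ u v p) :
    HasDissection (IsSemiCanonicalTriangle α) 2 (convexHull ℝ {v, u, p}) := by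
  obtain ⟨q, hq, hvq⟩ := exists_sbtw_edgeCanonical hα0 hcol hang
  have hcolu : ¬Collinear ℝ {v, u, q} := not_collinear_of_sbtw hq hcol
  have hcolp : ¬Collinear ℝ {v, q, p} := by
    rw [Set.pair_comm] at hcol ⊢
    exact not_collinear_of_sbtw hq.symm hcol
  have hsemi {x : ℝ²} (hx : ¬Collinear ℝ {v, q, x}) (hxq : EdgeCanonical α x q) :
      IsSemiCanonicalTriangle α (convexHull ℝ {v, q, x}) := by
    rw [Set.insert_comm] at hx ⊢
    exact ⟨q, v, x, affineIndependent_iff_not_collinear_set.2 hx, hvq.symm, hxq.symm, rfl⟩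
  refine HasDissection.convexHull_of_sbtw hq hcol (.of_prop ?_)
    (.of_prop (hsemi hcolp (hup.symm.of_sbtw hq.symm)))
  rw [Set.pair_comm] at hcolu ⊢
  exact hsemi hcolu (hup.of_sbtw hq)

theorem HasDissection.exists_vertices {α : ℝ} {n : ℕ} {S : Set ℝ²}
    (h : HasDissection (IsSemiCanonicalTriangle α) n S) :
    ∃ A B C : Fin n → ℝ², (∀ m, AffineIndependent ℝ ![A m, B m, C m]) ∧
      (∀ m m', m ≠ m' → Disjoint (interior (convexHull ℝ {A m, B m, C m}))
        (interior (convexHull ℝ {A m', B m', C m'}))) ∧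
      (⋃ m, convexHull ℝ {A m, B m, C m}) = S ∧
      ∀ m, EdgeCanonical α (A m) (B m) ∧ EdgeCanonical α (A m) (C m) := by
  obtain ⟨T, hT, hdisj, rfl⟩ := h
  choose A B C hind hAB hAC hTeq using hT
  obtain rfl : T = fun m => convexHull ℝ {A m, B m, C m} := funext hTeq
  exact ⟨A, B, C, hind, hdisj, rfl, fun m => ⟨hAB m, hAC m⟩⟩

theorem stmt17_general (α : ℝ) (hα0 : 0 < α) (u v w : ℝ²) (hind : AffineIndependent ℝ ![u, v, w])
    (h1 : α / 2 < ∠ w u v) (h2 : α / 2 < ∠ u v w) (h3 : α / 2 < ∠ v w u) :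
    HasDissection (IsSemiCanonicalTriangle α) 4 (convexHull ℝ {u, v, w}) := by
  have hcol : ¬Collinear ℝ {u, v, w} := affineIndependent_iff_not_collinear_set.1 hind
  obtain ⟨p, hp, hup⟩ := exists_sbtw_edgeCanonical hα0 hcol (by rwa [EuclideanGeometry.angle_comm])
  refine HasDissection.convexHull_of_sbtw (m := 2) (n := 2) hp hcol ?_ ?_
  · rw [Set.insert_comm]
    refine hasDissection_two_of_edgeCanonical hα0 ?_ hup (by rwa [hp.angle_eq_right])
    rw [Set.insert_comm]
    exact not_collinear_of_sbtw hp hcol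
  · rw [Set.pair_comm] at hcol ⊢
    rw [Set.insert_comm]
    refine hasDissection_two_of_edgeCanonical hα0 ?_ hup
      (by rwa [hp.symm.angle_eq_right, EuclideanGeometry.angle_comm])
    rw [Set.insert_comm]
    exact not_collinear_of_sbtw hp.symm hcol

theorem stmt17 (α : ℝ) (hα0 : 0 < α) (hα : α ≤ Real.pi / 3)
    (u v w : EuclideanSpace ℝ (Fin 2))
    (hind : AffineIndependent ℝ ![u, v, w])
    (h1 : α ≤ EuclideanGeometry.angle w u v)
    (h2 : α ≤ EuclideanGeometry.angle u v w)
    (h3 : α ≤ EuclideanGeometry.angle v w u) :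
    ∃ k : ℕ, k ≤ 4 ∧ ∃ A B C : Fin k → EuclideanSpace ℝ (Fin 2),
      (∀ m, AffineIndependent ℝ ![A m, B m, C m]) ∧
      (∀ m m', m ≠ m' →
        Disjoint (interior (convexHull ℝ {A m, B m, C m}))
          (interior (convexHull ℝ {A m', B m', C m'}))) ∧
      (⋃ m, (convexHull ℝ {A m, B m, C m} : Set (EuclideanSpace ℝ (Fin 2)))) =
        convexHull ℝ {u, v, w} ∧
      (∀ m, (EdgeCanonical α (A m) (B m) ∧ EdgeCanonical α (B m) (C m)) ∨
        (EdgeCanonical α (A m) (B m) ∧ EdgeCanonical α (A m) (C m)) ∨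
        (EdgeCanonical α (B m) (C m) ∧ EdgeCanonical α (A m) (C m))) := by
  obtain ⟨A, B, C, hind', hdisj, hunion, hedge⟩ := (stmt17_general α hα0 u v w hind
    (by linarith) (by linarith) (by linarith)).exists_vertices
  exact ⟨4, le_rfl, A, B, C, hind', hdisj, hunion, fun m => .inr (.inl (hedge m))⟩
end
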